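/- Let f ∈ C²(S¹×ℝ×ℝ, ℝ). If e is an equilibrium of the equation u_t = u_xx + f(x,u,u_x) and γ is a classical periodic solution of minimal period p > 0 with γ(·,t) ≠ e for every t, then the zero number z(e − γ(·,t)) is the same for all t ∈ ℝ, and for every t the function x ↦ e(x) − γ(x,t) has no multiple zero. The same conclusions hold for the difference of two distinct equilibria and for the difference γ₁(·,t) − γ₂(·,t) of two classical periodic solutions satisfying γ₁(·,t) ≠ γ₂(·,t) for all t. -/

import Mathlib

open Set

/-- Zero number (number of strict sign changes) of a `1`-periodic function on `ℝ`,
viewed as a function on the circle `S¹ = ℝ/ℤ`. -/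
noncomputable def zeroNumber (φ : ℝ → ℝ) : ℕ∞ :=
  ⨆ k ∈ {k : ℕ | ∃ x : Fin k → ℝ, StrictMono x ∧ (∀ i j : Fin k, x j < x i + 1) ∧
      ∀ i : Fin k, φ (x i) * φ (x (finRotate k i)) < 0}, (k : ℕ∞)

/-- A multiple zero of a (C¹) function `φ : ℝ → ℝ`. -/
def HasMultipleZero (φ : ℝ → ℝ) : Prop := ∃ x, φ x = 0 ∧ deriv φ x = 0

/-- An equilibrium of `u_t = u_xx + f(x,u,u_x)` on the circle: a `1`-periodic `C²`
function `e` with `e'' + f(x,e,e') = 0`. -/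
def IsEquilibrium (f : ℝ → ℝ → ℝ → ℝ) (e : ℝ → ℝ) : Prop :=
  Function.Periodic e 1 ∧ ContDiff ℝ 2 e ∧
    ∀ x, deriv (deriv e) x + f x (e x) (deriv e x) = 0

/-- A classical solution `γ` (written `γ t x` for `γ(x,t)`) on `S¹ × ℝ` of
`u_t = u_xx + f(x,u,u_x)`. -/
def IsClassicalSolution (f : ℝ → ℝ → ℝ → ℝ) (γ : ℝ → ℝ → ℝ) : Prop :=
  (∀ t, Function.Periodic (γ t) 1)
  ∧ Continuous (fun p : ℝ × ℝ => γ p.1 p.2)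
  ∧ (∀ t x : ℝ, DifferentiableAt ℝ (fun s => γ s x) t)
  ∧ (∀ t, Differentiable ℝ (γ t))
  ∧ (∀ t, Differentiable ℝ (deriv (γ t)))
  ∧ Continuous (fun p : ℝ × ℝ => deriv (fun s => γ s p.2) p.1)
  ∧ Continuous (fun p : ℝ × ℝ => deriv (γ p.1) p.2)
  ∧ Continuous (fun p : ℝ × ℝ => deriv (deriv (γ p.1)) p.2)
  ∧ ∀ t x : ℝ, deriv (fun s => γ s x) t
      = deriv (deriv (γ t)) x + f x (γ t x) (deriv (γ t) x)

/-- A classical periodic solution of minimal period `p > 0`. -/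
def IsPeriodicSolution (f : ℝ → ℝ → ℝ → ℝ) (γ : ℝ → ℝ → ℝ) (p : ℝ) : Prop :=
  IsClassicalSolution f γ ∧ 0 < p ∧ (∀ t, γ (t + p) = γ t) ∧
    ∀ q, 0 < q → (∀ t, γ (t + q) = γ t) → p ≤ q

/-! The difference `v = γ₁ - γ₂` of two solutions satisfies `|v_t - v_xx| ≤ C (|v| + |v_x|)`.

*Monotonicity and finiteness.* Apply the maximum principle to `∏ i, σ i * v(x_i, t)` over cyclically
ordered configurations `x` with alternating signs `σ`: along the flow an alternating configuration
can never be lost backwards in time, so `z(v(·, t))` is non-increasing in `t`. Dividing the product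
by a barrier in the gaps `x_{i+1} - x_i` shows that an entire bounded solution has finite zero
number.

*Constancy.* The flow of `(γ₁, γ₂)` recurs, and `z` is lower semicontinuous, so the non-increasing
function `t ↦ z(v(·, t))` is constant.

*Simplicity of zeros.* At a multiple zero `(x₀, t₀)`, put `y = (x - x₀) e^{θ/2}` and
`t = t₀ - e^{-θ}`. Then `v` becomes a solution of a perturbed Ornstein–Uhlenbeck equation of size
`O(e^{-θ})`. Its frequency (Rayleigh quotient) is almost monotone, hence bounded, which confines its
`L²`-mass to a fixed ball, while the decay makes the moments against the Hermite polynomials `1` and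
`y` negligible along a sequence of times. A function nearly orthogonal to `1` and `y` changes sign
twice, so just before `t₀` the zero number is at least `z(v(·, t₀)) + 2`, contradicting
constancy. -/

open Filter Topology

section DerivativeTests

lemma second_deriv_nonpos_of_isLocalMax {φ φ' : ℝ → ℝ} {φ'' a : ℝ}
    (hφ : ∀ᶠ r in 𝓝 a, HasDerivAt φ (φ' r) r) (hφ' : HasDerivAt φ' φ'' a)
    (hmax : IsLocalMax φ a) : φ'' ≤ 0 := by
  by_contra! hpos
  have hderiv : deriv φ =ᶠ[𝓝 a] φ' := hφ.mono fun r hr => hr.deriv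
  have hzero : deriv φ a = 0 := hmax.deriv_eq_zero
  have hmin : IsLocalMin φ a :=
    isLocalMin_of_deriv_deriv_pos (by rwa [hderiv.deriv_eq, hφ'.deriv]) hzero
      hφ.self_of_nhds.continuousAt
  have hconst : φ =ᶠ[𝓝 a] fun _ => φ a := by
    filter_upwards [hmax, hmin] with r h₁ h₂ using le_antisymm h₁ h₂
  have hderiv_zero : φ' =ᶠ[𝓝 a] fun _ => 0 := by
    simpa using hderiv.symm.trans hconst.deriv
  have : φ'' = 0 := by
    rw [← hφ'.deriv, hderiv_zero.deriv_eq, deriv_const]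
  exact hpos.ne' this

lemma deriv_nonneg_of_eventually_le_left {g : ℝ → ℝ} {g' a : ℝ} (hg : HasDerivAt g g' a)
    (hle : ∀ᶠ r in 𝓝[<] a, g r ≤ g a) : 0 ≤ g' := by
  have hslope : Tendsto (slope g a) (𝓝[<] a) (𝓝 g') :=
    (hasDerivAt_iff_tendsto_slope.1 hg).mono_left (nhdsWithin_mono a fun r hr => ne_of_lt hr)
  refine ge_of_tendsto hslope ?_
  filter_upwards [hle, self_mem_nhdsWithin] with r hr hra
  rw [slope_def_field]
  exact div_nonneg_of_nonpos (sub_nonpos.2 hr) (sub_nonpos.2 (le_of_lt hra))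

end DerivativeTests

section CyclicConfigurations

variable {n : ℕ}

/-- The gap between `x j` and its successor in a tuple of points of the circle given by lifts
`x 0 ≤ ⋯ ≤ x n ≤ x 0 + 1`; the successor of `x n` is `x 0 + 1`. -/
noncomputable def cyclicGap (x : Fin (n + 1) → ℝ) (j : Fin (n + 1)) : ℝ :=
  x (j + 1) - x j + if j = Fin.last n then 1 else 0

/-- The closed set of cyclically ordered tuples of `n + 1` points of the circle. -/
def cyclicConfig (n : ℕ) : Set (Fin (n + 1) → ℝ) := {x | ∀ j, 0 ≤ cyclicGap x j}

lemma cyclicGap_castSucc (x : Fin (n + 1) → ℝ) (j : Fin n) :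
    cyclicGap x j.castSucc = x j.succ - x j.castSucc := by
  simp [cyclicGap, (Fin.castSucc_lt_last j).ne]

lemma cyclicGap_last (x : Fin (n + 1) → ℝ) :
    cyclicGap x (Fin.last n) = x 0 + 1 - x (Fin.last n) := by
  simp only [cyclicGap, Fin.last_add_one, if_true]
  ring

lemma cyclicGap_nonneg_iff {x : Fin (n + 1) → ℝ} :
    (∀ j, 0 ≤ cyclicGap x j) ↔ Monotone x ∧ x (Fin.last n) ≤ x 0 + 1 := by
  rw [Fin.forall_fin_succ', Fin.monotone_iff_le_succ, cyclicGap_last]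
  simp [cyclicGap_castSucc]

lemma cyclicGap_pos_iff {x : Fin (n + 1) → ℝ} :
    (∀ j, 0 < cyclicGap x j) ↔ StrictMono x ∧ x (Fin.last n) < x 0 + 1 := by
  rw [Fin.forall_fin_succ', Fin.strictMono_iff_lt_succ, cyclicGap_last]
  simp [cyclicGap_castSucc]

lemma cyclicGap_add_const (x : Fin (n + 1) → ℝ) (c : ℝ) (j : Fin (n + 1)) :
    cyclicGap (fun i => x i + c) j = cyclicGap x j := by
  simp [cyclicGap]

lemma sum_cyclicGap (x : Fin (n + 1) → ℝ) : ∑ j, cyclicGap x j = 1 := by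
  have hshift : ∑ j : Fin (n + 1), x (j + 1) = ∑ j, x j :=
    Equiv.sum_comp (Equiv.addRight (1 : Fin (n + 1))) x
  simp [cyclicGap, Finset.sum_add_distrib, Finset.sum_sub_distrib, hshift]

lemma continuous_cyclicGap (j : Fin (n + 1)) :
    Continuous fun x : Fin (n + 1) → ℝ => cyclicGap x j := by
  unfold cyclicGap
  fun_prop

lemma isClosed_cyclicConfig : IsClosed (cyclicConfig n) := by
  simp only [cyclicConfig, ofPred_forall]
  exact isClosed_iInter fun j => isClosed_le continuous_const (continuous_cyclicGap j)

lemma eventually_cyclicGap_pos {x : Fin (n + 1) → ℝ} (hx : ∀ j, 0 < cyclicGap x j) :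
    ∀ᶠ y in 𝓝 x, ∀ j, 0 < cyclicGap y j :=
  eventually_all.2 fun j => (continuous_cyclicGap j).continuousAt.eventually (lt_mem_nhds (hx j))

lemma exists_int_add_mem_Icc {x : Fin (n + 1) → ℝ} (hx : x ∈ cyclicConfig n) :
    ∃ m : ℤ, ∀ i, x i + m ∈ Icc (0 : ℝ) 2 := by
  obtain ⟨hmono, hlast⟩ := cyclicGap_nonneg_iff.1 hx
  refine ⟨-⌊x 0⌋, fun i => ?_⟩
  have h₀ := hmono (Fin.zero_le i)
  have h₁ := hmono (Fin.le_last i)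
  have h₂ := Int.floor_le (x 0)
  have h₃ := Int.lt_floor_add_one (x 0)
  push_cast
  constructor <;> linarith

lemma exists_isMaxOn_cyclicConfig_prod {T : Type*} [TopologicalSpace T] {I : Set T}
    (hI : IsCompact I) (hne : I.Nonempty) {F : (Fin (n + 1) → ℝ) × T → ℝ}
    (hF : ContinuousOn F (cyclicConfig n ×ˢ I))
    (hshift : ∀ x s (m : ℤ), F (fun i => x i + m, s) = F (x, s)) :
    ∃ p ∈ cyclicConfig n ×ˢ I, IsMaxOn F (cyclicConfig n ×ˢ I) p := by
  set K : Set (Fin (n + 1) → ℝ) := cyclicConfig n ∩ univ.pi fun _ => Icc 0 2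
  have hKcompact : IsCompact K :=
    (isCompact_univ_pi fun _ => isCompact_Icc).inter_left isClosed_cyclicConfig
  have hreduce : ∀ x ∈ cyclicConfig n, ∃ y ∈ K, ∀ s, F (y, s) = F (x, s) := by
    intro x hx
    obtain ⟨m, hm⟩ := exists_int_add_mem_Icc hx
    refine ⟨fun i => x i + m, ⟨fun j => ?_, fun i _ => hm i⟩, fun s => hshift x s m⟩
    rw [cyclicGap_add_const]
    exact hx j
  obtain ⟨s₀, hs₀⟩ := hne
  have hzero : (fun _ => 0 : Fin (n + 1) → ℝ) ∈ K :=
    ⟨cyclicGap_nonneg_iff.2 ⟨monotone_const, by norm_num⟩, fun i _ => by norm_num⟩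
  obtain ⟨p, hp, hmax⟩ := (hKcompact.prod hI).exists_isMaxOn ⟨(_, s₀), hzero, hs₀⟩
    (hF.mono (prod_mono inter_subset_left Subset.rfl))
  refine ⟨p, ⟨hp.1.1, hp.2⟩, fun q hq => ?_⟩
  obtain ⟨y, hyK, hy⟩ := hreduce q.1 hq.1
  exact (hy q.2).symm.trans_le (hmax (show (y, q.2) ∈ K ×ˢ I from ⟨hyK, hq.2⟩))

/-- `φ` changes sign strictly between any two consecutive points of the cyclically ordered
tuple `x`. -/
def IsAlternating (φ : ℝ → ℝ) (x : Fin (n + 1) → ℝ) : Prop :=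
  (∀ j, 0 < cyclicGap x j) ∧ ∀ i, φ (x i) * φ (x (i + 1)) < 0

variable {φ : ℝ → ℝ} {x : Fin (n + 1) → ℝ}

lemma IsAlternating.le_zeroNumber (hx : IsAlternating φ x) :
    ((n + 1 : ℕ) : ℕ∞) ≤ zeroNumber φ := by
  obtain ⟨hmono, hlast⟩ := cyclicGap_pos_iff.1 hx.1
  refine le_iSup₂_of_le (n + 1) ⟨x, hmono, fun i j => ?_, fun i => ?_⟩ le_rfl
  · have h₁ := hmono.monotone (Fin.le_last j)
    have h₂ := hmono.monotone (Fin.zero_le i)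
    linarith
  · rw [finRotate_apply]
    exact hx.2 i

lemma zeroNumber_le {b : ℕ∞}
    (h : ∀ (n : ℕ) (x : Fin (n + 1) → ℝ), IsAlternating φ x → ((n + 1 : ℕ) : ℕ∞) ≤ b) :
    zeroNumber φ ≤ b := by
  refine iSup₂_le fun k ⟨x, hmono, hlt, hsign⟩ => ?_
  rcases k with _ | n
  · simp
  · refine h n x ⟨cyclicGap_pos_iff.2 ⟨hmono, hlt _ _⟩, fun i => ?_⟩
    simpa only [finRotate_apply] using hsign i

lemma IsAlternating.eventually (hx : IsAlternating φ x) : ∀ᶠ ψ in 𝓝 φ, IsAlternating ψ x := by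
  have hsign : ∀ᶠ ψ in 𝓝 φ, ∀ i, ψ (x i) * ψ (x (i + 1)) < 0 :=
    eventually_all.2 fun i =>
      ((continuous_apply (x i)).mul (continuous_apply (x (i + 1)))).continuousAt.eventually
        (gt_mem_nhds (hx.2 i))
  exact hsign.mono fun ψ hψ => ⟨hx.1, hψ⟩

lemma lowerSemicontinuous_zeroNumber : LowerSemicontinuous zeroNumber := by
  intro φ b hb
  obtain ⟨n, x, hx, hn⟩ : ∃ (n : ℕ) (x : Fin (n + 1) → ℝ),
      IsAlternating φ x ∧ b < ((n + 1 : ℕ) : ℕ∞) := by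
    by_contra! hcon
    exact hb.not_ge (zeroNumber_le hcon)
  exact hx.eventually.mono fun ψ hψ => hn.trans_le hψ.le_zeroNumber

end CyclicConfigurations

section AlternatingProduct

variable {n : ℕ} {σ : Fin (n + 1) → ℝ} {φ ψ : ℝ → ℝ} {x y : Fin (n + 1) → ℝ}

/-- The product `∏ᵢ σᵢ φ(xᵢ)`, truncated to `0` unless `φ` has at each `x i` the sign of `σ i`.
For an alternating sign pattern `σ` it vanishes as soon as two neighbouring points coincide. -/
noncomputable def alternatingProd (σ : Fin (n + 1) → ℝ) (φ : ℝ → ℝ) (x : Fin (n + 1) → ℝ) : ℝ :=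
  ∏ i, max (σ i * φ (x i)) 0

lemma alternatingProd_pos_iff : 0 < alternatingProd σ φ x ↔ ∀ i, 0 < σ i * φ (x i) := by
  refine ⟨fun h i => ?_, fun h => Finset.prod_pos fun i _ => lt_max_of_lt_left (h i)⟩
  by_contra! hi
  exact h.ne' (Finset.prod_eq_zero (Finset.mem_univ i) (max_eq_right hi))

lemma alternatingProd_eq_mul_prod_div (hφ : 0 < alternatingProd σ φ x)
    (hratio : ∀ i, 0 ≤ ψ (y i) / φ (x i)) :
    alternatingProd σ ψ y = alternatingProd σ φ x * ∏ i, ψ (y i) / φ (x i) := by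
  rw [alternatingProd, alternatingProd, ← Finset.prod_mul_distrib]
  refine Finset.prod_congr rfl fun i _ => ?_
  have hi := alternatingProd_pos_iff.1 hφ i
  have hne : φ (x i) ≠ 0 := right_ne_zero_of_mul hi.ne'
  have hmul : σ i * ψ (y i) = σ i * φ (x i) * (ψ (y i) / φ (x i)) := by field_simp
  rw [max_eq_left hi.le, hmul, max_eq_left (mul_nonneg hi.le (hratio i))]

lemma isAlternating_of_alternatingProd_pos (hper : Function.Periodic φ 1)
    (hσ : ∀ i, σ i * σ (i + 1) < 0) (hx : x ∈ cyclicConfig n)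
    (hpos : 0 < alternatingProd σ φ x) : IsAlternating φ x := by
  have hsign := alternatingProd_pos_iff.1 hpos
  have halt : ∀ i, φ (x i) * φ (x (i + 1)) < 0 := by
    intro i
    have hprod : 0 < (σ i * σ (i + 1)) * (φ (x i) * φ (x (i + 1))) := by
      rw [mul_mul_mul_comm]
      exact mul_pos (hsign i) (hsign (i + 1))
    exact neg_of_mul_pos_right hprod (hσ i).le
  refine ⟨fun j => (hx j).lt_of_ne fun hgap => ?_, halt⟩
  have heq : φ (x (j + 1)) = φ (x j) := by
    unfold cyclicGap at hgap
    split_ifs at hgap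
    · rw [← hper (x (j + 1))]
      congr 1
      linarith
    · congr 1
      linarith
  have := halt j
  rw [heq] at this
  exact this.not_ge (mul_self_nonneg _)

lemma IsAlternating.alternatingProd_self_pos (hx : IsAlternating φ x) :
    0 < alternatingProd (fun i => φ (x i)) φ x :=
  alternatingProd_pos_iff.2 fun i => mul_self_pos.2 (left_ne_zero_of_mul (hx.2 i).ne)

lemma alternatingProd_add_intCast (hper : Function.Periodic φ 1) (m : ℤ) :
    alternatingProd σ φ (fun i => x i + m) = alternatingProd σ φ x := by
  have hm : ∀ r, φ (r + m) = φ r := fun r => by simpa using hper.int_mul m r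
  simp only [alternatingProd, hm]

lemma alternatingProd_le {M : ℝ} (hφ : ∀ r, |φ r| ≤ M) :
    alternatingProd σ φ x ≤ ∏ i, |σ i| * M := by
  refine Finset.prod_le_prod (fun i _ => le_max_right _ _) fun i _ => max_le ?_ ?_
  · exact (le_abs_self _).trans (abs_mul (σ i) _ ▸ mul_le_mul_of_nonneg_left (hφ _) (abs_nonneg _))
  · exact mul_nonneg (abs_nonneg _) ((abs_nonneg _).trans (hφ 0))

end AlternatingProduct

section MaximumPrinciple

/-- The differential inequality `|vₜ - vₓₓ| ≤ C (|v| + |vₓ|)` for a function on `ℝ × S¹`, written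
`v t x`, with its partial derivatives supplied as functions. -/
structure ParabolicIneq (C : ℝ) (v vt vx vxx : ℝ → ℝ → ℝ) : Prop where
  hasDerivAt_time : ∀ t x, HasDerivAt (fun s => v s x) (vt t x) t
  hasDerivAt_space : ∀ t x, HasDerivAt (v t) (vx t x) x
  hasDerivAt_space₂ : ∀ t x, HasDerivAt (vx t) (vxx t x) x
  periodic : ∀ t, Function.Periodic (v t) 1
  continuous : Continuous fun p : ℝ × ℝ => v p.1 p.2
  abs_sub_le : ∀ t x, |vt t x - vxx t x| ≤ C * (|v t x| + |vx t x|)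

/-- A positive weight `Ψ` on cyclic configurations, with first and second partial derivatives
`Ψ₁ i` and `Ψ₂ i`, such that `exp (Λ t) * Ψ` is a strict supersolution of the equation which the
differential inequality with constant `C` induces on configurations. -/
structure IsBarrier {n : ℕ} (C Λ : ℝ) (Ψ : (Fin (n + 1) → ℝ) → ℝ)
    (Ψ₁ Ψ₂ : Fin (n + 1) → (Fin (n + 1) → ℝ) → ℝ) : Prop where
  continuousOn : ContinuousOn Ψ (cyclicConfig n)
  pos : ∀ x ∈ cyclicConfig n, 0 < Ψ x
  add_intCast : ∀ x (m : ℤ), Ψ (fun i => x i + m) = Ψ x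
  hasDerivAt : ∀ x i, (∀ j, 0 < cyclicGap x j) →
    HasDerivAt (fun r => Ψ (Function.update x i r)) (Ψ₁ i x) (x i)
  hasDerivAt₂ : ∀ x i, (∀ j, 0 < cyclicGap x j) →
    HasDerivAt (fun r => Ψ₁ i (Function.update x i r)) (Ψ₂ i x) (x i)
  sum_lt : ∀ x, (∀ j, 0 < cyclicGap x j) →
    ∑ i, (Ψ₂ i x + C * |Ψ₁ i x| + C * Ψ x) < Λ * Ψ x

variable {n : ℕ} {C Λ : ℝ} {v vt vx vxx : ℝ → ℝ → ℝ} {σ : Fin (n + 1) → ℝ}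
  {Ψ : (Fin (n + 1) → ℝ) → ℝ} {Ψ₁ Ψ₂ : Fin (n + 1) → (Fin (n + 1) → ℝ) → ℝ}

lemma ParabolicIneq.continuous_alternatingProd (hv : ParabolicIneq C v vt vx vxx) :
    Continuous fun p : (Fin (n + 1) → ℝ) × ℝ => alternatingProd σ (v p.2) p.1 := by
  have hcont : ∀ i, Continuous fun p : (Fin (n + 1) → ℝ) × ℝ => v p.2 (p.1 i) := fun i =>
    hv.continuous.comp (by fun_prop : Continuous fun p : (Fin (n + 1) → ℝ) × ℝ => (p.2, p.1 i))
  exact continuous_finsetProd _ fun i _ => (continuous_const.mul (hcont i)).max continuous_const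

lemma hasDerivAt_update_of_pos {Φ Φ' : (Fin (n + 1) → ℝ) → ℝ} {i : Fin (n + 1)}
    (h : ∀ x, (∀ j, 0 < cyclicGap x j) →
      HasDerivAt (fun r => Φ (Function.update x i r)) (Φ' x) (x i))
    {x : Fin (n + 1) → ℝ} {r : ℝ} (hr : ∀ j, 0 < cyclicGap (Function.update x i r) j) :
    HasDerivAt (fun r => Φ (Function.update x i r)) (Φ' (Function.update x i r)) r := by
  simpa only [Function.update_idem, Function.update_self] using h _ hr

/-- At a spatial maximum of `∏ᵢ σᵢ φ(xᵢ) / Ψ(x)` the logarithmic derivatives of the factors of the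
numerator are those of `Ψ`. -/
lemma IsBarrier.div_eq_and_div_le_of_isMaxOn (hΨ : IsBarrier C Λ Ψ Ψ₁ Ψ₂) {φ φ₁ φ₂ : ℝ → ℝ}
    (hφ₁ : ∀ r, HasDerivAt φ (φ₁ r) r) (hφ₂ : ∀ r, HasDerivAt φ₁ (φ₂ r) r)
    {x : Fin (n + 1) → ℝ} (hx : ∀ j, 0 < cyclicGap x j) (hpos : 0 < alternatingProd σ φ x)
    (hmax : IsMaxOn (fun y => alternatingProd σ φ y / Ψ y) (cyclicConfig n) x)
    (i : Fin (n + 1)) :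
    φ₁ (x i) / φ (x i) = Ψ₁ i x / Ψ x ∧ φ₂ (x i) / φ (x i) ≤ Ψ₂ i x / Ψ x := by
  have hφne : ∀ j, φ (x j) ≠ 0 := fun j =>
    right_ne_zero_of_mul (alternatingProd_pos_iff.1 hpos j).ne'
  have hΨpos := hΨ.pos x fun j => (hx j).le
  have hgap : ∀ᶠ r in 𝓝 (x i), ∀ j, 0 < cyclicGap (Function.update x i r) j := by
    have hupdate : Continuous fun r => Function.update x i r := by fun_prop
    have := hupdate.tendsto (x i)
    rw [Function.update_eq_self] at this
    exact this.eventually (eventually_cyclicGap_pos hx)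
  have hratio : ∀ᶠ r in 𝓝 (x i), 0 < φ r / φ (x i) :=
    ((hφ₁ (x i)).continuousAt.div_const _).eventually
      (lt_mem_nhds (by simp [hφne i]))
  have hlocal : IsLocalMax (fun r => φ r / φ (x i) - Ψ (Function.update x i r) / Ψ x) (x i) := by
    filter_upwards [hgap, hratio] with r hr hφr
    have hmem : Function.update x i r ∈ cyclicConfig n := fun j => (hr j).le
    have hprod : ∏ j, φ (Function.update x i r j) / φ (x j) = φ r / φ (x i) := by
      rw [Fintype.prod_eq_single i fun j hj => by
        rw [Function.update_of_ne hj, div_self (hφne j)], Function.update_self]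
    have hle : alternatingProd σ φ (Function.update x i r) / Ψ (Function.update x i r)
        ≤ alternatingProd σ φ x / Ψ x := hmax hmem
    rw [alternatingProd_eq_mul_prod_div hpos, hprod, div_le_div_iff₀ (hΨ.pos _ hmem) hΨpos,
      mul_assoc, mul_le_mul_iff_right₀ hpos, ← le_div_iff₀ hΨpos] at hle
    · simpa [div_self (hφne i), div_self hΨpos.ne'] using hle
    · intro j
      rcases eq_or_ne j i with rfl | hj
      · simpa using hφr.le
      · simp [Function.update_of_ne hj, div_self (hφne j)]
  have hderiv₁ : ∀ᶠ r in 𝓝 (x i), HasDerivAt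
      (fun r => φ r / φ (x i) - Ψ (Function.update x i r) / Ψ x)
      (φ₁ r / φ (x i) - Ψ₁ i (Function.update x i r) / Ψ x) r := hgap.mono fun r hr =>
    ((hφ₁ r).div_const _).sub
      ((hasDerivAt_update_of_pos (fun y hy => hΨ.hasDerivAt y i hy) hr).div_const _)
  have hderiv₂ : HasDerivAt (fun r => φ₁ r / φ (x i) - Ψ₁ i (Function.update x i r) / Ψ x)
      (φ₂ (x i) / φ (x i) - Ψ₂ i x / Ψ x) (x i) :=
    ((hφ₂ _).div_const _).sub ((hΨ.hasDerivAt₂ x i hx).div_const _)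
  constructor
  · have := hlocal.hasDerivAt_eq_zero hderiv₁.self_of_nhds
    rwa [Function.update_eq_self, sub_eq_zero] at this
  · exact sub_nonpos.1 (second_deriv_nonpos_of_isLocalMax hderiv₁ hderiv₂ hlocal)

lemma ParabolicIneq.le_sum_div_of_isMaxOn (hv : ParabolicIneq C v vt vx vxx)
    {x : Fin (n + 1) → ℝ} {t s : ℝ} (hts : t < s) (hpos : 0 < alternatingProd σ (v s) x)
    (hmax : IsMaxOn (fun r => Real.exp (-Λ * r) * alternatingProd σ (v r) x) (Icc t s) s) :
    Λ ≤ ∑ i, vt s (x i) / v s (x i) := by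
  have hne : ∀ i, v s (x i) ≠ 0 := fun i =>
    right_ne_zero_of_mul (alternatingProd_pos_iff.1 hpos i).ne'
  have hderiv : HasDerivAt (fun r => Real.exp (-Λ * (r - s)) * ∏ i, v r (x i) / v s (x i))
      (-Λ + ∑ i, vt s (x i) / v s (x i)) s := by
    have hexp : HasDerivAt (fun r => Real.exp (-Λ * (r - s))) (-Λ) s := by
      simpa using (((hasDerivAt_id s).sub_const s).const_mul (-Λ)).exp
    have hprod := HasDerivAt.fun_finsetProd (u := Finset.univ)
      fun i _ => (hv.hasDerivAt_time s (x i)).div_const (v s (x i))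
    simpa [div_self (hne _)] using hexp.fun_mul hprod
  have hratio : ∀ᶠ r in 𝓝 s, ∀ i, 0 < v r (x i) / v s (x i) :=
    eventually_all.2 fun i =>
      ((hv.hasDerivAt_time s (x i)).continuousAt.div_const _).eventually
        (lt_mem_nhds (by simp [hne i]))
  have hle : ∀ᶠ r in 𝓝[<] s, Real.exp (-Λ * (r - s)) * ∏ i, v r (x i) / v s (x i)
      ≤ Real.exp (-Λ * (s - s)) * ∏ i, v s (x i) / v s (x i) := by
    filter_upwards [Ico_mem_nhdsLT hts, hratio.filter_mono nhdsWithin_le_nhds] with r hr hpos_r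
    have hle : Real.exp (-Λ * r) * alternatingProd σ (v r) x
        ≤ Real.exp (-Λ * s) * alternatingProd σ (v s) x := hmax ⟨hr.1, hr.2.le⟩
    rw [alternatingProd_eq_mul_prod_div hpos fun i => (hpos_r i).le, mul_left_comm,
      mul_comm (Real.exp (-Λ * s)), mul_le_mul_iff_right₀ hpos] at hle
    have hsplit : Real.exp (-Λ * (r - s)) = Real.exp (-Λ * r) / Real.exp (-Λ * s) := by
      rw [← Real.exp_sub]
      ring_nf
    simp only [hsplit, sub_self, mul_zero, Real.exp_zero, div_self (hne _), Finset.prod_const_one,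
      mul_one]
    rwa [div_mul_eq_mul_div, div_le_one (Real.exp_pos _)]
  linarith [deriv_nonneg_of_eventually_le_left hderiv hle]

lemma ParabolicIneq.div_le_add (hv : ParabolicIneq C v vt vx vxx) {t x : ℝ} (hne : v t x ≠ 0) :
    vt t x / v t x ≤ vxx t x / v t x + C * |vx t x / v t x| + C := by
  have hdiv : (vt t x - vxx t x) / v t x ≤ C * (|v t x| + |vx t x|) / |v t x| :=
    (le_abs_self _).trans (abs_div _ (v t x) ▸
      div_le_div_of_nonneg_right (hv.abs_sub_le t x) (abs_nonneg _))
  have hsplit : C * (|v t x| + |vx t x|) / |v t x| = C * |vx t x / v t x| + C := by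
    rw [abs_div]
    field_simp [abs_pos.2 hne]
    ring
  rw [hsplit, sub_div] at hdiv
  linarith

/-- The maximum over `cyclicConfig n × [t, t']` is attained at the initial time: at a later one the
first and second order conditions contradict the supersolution property of `Ψ`. -/
theorem ParabolicIneq.exists_alternatingProd_ge (hv : ParabolicIneq C v vt vx vxx)
    (hΨ : IsBarrier C Λ Ψ Ψ₁ Ψ₂) (hσ : ∀ i, σ i * σ (i + 1) < 0) {t t' : ℝ} (htt' : t ≤ t')
    {x' : Fin (n + 1) → ℝ} (hx' : x' ∈ cyclicConfig n) (hpos : 0 < alternatingProd σ (v t') x') :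
    ∃ x ∈ cyclicConfig n, Real.exp (-Λ * t') * (alternatingProd σ (v t') x' / Ψ x')
      ≤ Real.exp (-Λ * t) * (alternatingProd σ (v t) x / Ψ x) := by
  set F : (Fin (n + 1) → ℝ) × ℝ → ℝ := fun p =>
    Real.exp (-Λ * p.2) * (alternatingProd σ (v p.2) p.1 / Ψ p.1) with hF
  have hFcont : ContinuousOn F (cyclicConfig n ×ˢ Icc t t') := by
    refine ContinuousOn.mul (by fun_prop) (hv.continuous_alternatingProd.continuousOn.div ?_ ?_)
    · exact hΨ.continuousOn.comp continuousOn_fst fun p hp => hp.1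
    · exact fun p hp => (hΨ.pos _ hp.1).ne'
  obtain ⟨⟨x, s⟩, ⟨hx, hs⟩, hmax⟩ := exists_isMaxOn_cyclicConfig_prod isCompact_Icc
    (nonempty_Icc.2 htt') hFcont fun x s m => by
      simp only [hF, alternatingProd_add_intCast (hv.periodic s), hΨ.add_intCast]
  have hle : F (x', t') ≤ F (x, s) := hmax (show (x', t') ∈ _ from ⟨hx', right_mem_Icc.2 htt'⟩)
  suffices s = t from ⟨x, hx, this ▸ hle⟩
  by_contra hst
  have hxpos : 0 < alternatingProd σ (v s) x := by
    have hFpos : 0 < F (x, s) :=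
      (mul_pos (Real.exp_pos _) (div_pos hpos (hΨ.pos _ hx'))).trans_le hle
    exact (div_pos_iff_of_pos_right (hΨ.pos x hx)).1
      (pos_of_mul_pos_right hFpos (Real.exp_pos _).le)
  obtain ⟨hgap, -⟩ := isAlternating_of_alternatingProd_pos (hv.periodic s) hσ hx hxpos
  have htime : Λ ≤ ∑ i, vt s (x i) / v s (x i) := by
    refine hv.le_sum_div_of_isMaxOn (hs.1.lt_of_ne' hst) hxpos fun r hr => ?_
    have : F (x, r) ≤ F (x, s) := hmax (show (x, r) ∈ _ from ⟨hx, hr.1, hr.2.trans hs.2⟩)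
    simp only [hF, mul_div_assoc', div_le_div_iff_of_pos_right (hΨ.pos x hx)] at this
    exact this
  have hspace := hΨ.div_eq_and_div_le_of_isMaxOn (hv.hasDerivAt_space s) (hv.hasDerivAt_space₂ s)
    hgap hxpos fun y hy => le_of_mul_le_mul_left
      (show F (y, s) ≤ F (x, s) from hmax (show (y, s) ∈ _ from ⟨hy, hs⟩)) (Real.exp_pos _)
  have hΨpos := hΨ.pos x hx
  have hterm : ∀ i, vt s (x i) / v s (x i) ≤ (Ψ₂ i x + C * |Ψ₁ i x| + C * Ψ x) / Ψ x := by
    intro i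
    have hne : v s (x i) ≠ 0 := right_ne_zero_of_mul (alternatingProd_pos_iff.1 hxpos i).ne'
    have hbound := hv.div_le_add hne
    rw [(hspace i).1, abs_div, abs_of_pos hΨpos] at hbound
    rw [add_div, add_div, mul_div_assoc, mul_div_cancel_right₀ _ hΨpos.ne']
    linarith [(hspace i).2]
  refine (htime.trans (Finset.sum_le_sum fun i _ => hterm i)).not_gt ?_
  rw [← Finset.sum_div, div_lt_iff₀ hΨpos]
  exact hΨ.sum_lt x hgap

lemma isBarrier_one (hΛ : ((n : ℝ) + 1) * C < Λ) :
    IsBarrier C Λ (fun _ : Fin (n + 1) → ℝ => (1 : ℝ)) (fun _ _ => 0) (fun _ _ => 0) where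
  continuousOn := continuousOn_const
  pos _ _ := one_pos
  add_intCast _ _ := rfl
  hasDerivAt _ _ _ := hasDerivAt_const _ _
  hasDerivAt₂ _ _ _ := hasDerivAt_const _ _
  sum_lt _ _ := by simpa using hΛ

theorem ParabolicIneq.antitone_zeroNumber (hv : ParabolicIneq C v vt vx vxx) :
    Antitone fun t => zeroNumber (v t) := by
  intro t t' htt'
  refine zeroNumber_le fun n x' hx' => ?_
  have hpos := hx'.alternatingProd_self_pos
  obtain ⟨x, hx, hle⟩ := hv.exists_alternatingProd_ge (isBarrier_one (lt_add_one _)) hx'.2 htt'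
    (fun j => (hx'.1 j).le) hpos
  refine (isAlternating_of_alternatingProd_pos (hv.periodic t) hx'.2 hx ?_).le_zeroNumber
  have := (mul_pos (Real.exp_pos _) (div_pos hpos one_pos)).trans_le hle
  rw [div_one] at this
  exact pos_of_mul_pos_right this (Real.exp_pos _).le

end MaximumPrinciple

section Finiteness

variable {n : ℕ}

lemma hasDerivAt_cyclicGap_update (x : Fin (n + 1) → ℝ) (i j : Fin (n + 1)) :
    HasDerivAt (fun r => cyclicGap (Function.update x i r) j)
      ((if j = i - 1 then 1 else 0) - if j = i then 1 else 0) (x i) := by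
  have hupdate := hasDerivAt_pi.1 (hasDerivAt_update x i (x i))
  have := ((hupdate (j + 1)).sub (hupdate j)).add_const (if j = Fin.last n then (1 : ℝ) else 0)
  simp only [Pi.single_apply, ← eq_sub_iff_add_eq] at this
  exact this

lemma hasDerivAt_sum_comp_cyclicGap {h h' : ℝ → ℝ} (x : Fin (n + 1) → ℝ) (i : Fin (n + 1))
    (hh : ∀ j, HasDerivAt h (h' (cyclicGap x j)) (cyclicGap x j)) :
    HasDerivAt (fun r => ∑ j, h (cyclicGap (Function.update x i r) j))
      (h' (cyclicGap x (i - 1)) - h' (cyclicGap x i)) (x i) := by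
  have hterm : ∀ j ∈ (Finset.univ : Finset (Fin (n + 1))),
      HasDerivAt (fun r => h (cyclicGap (Function.update x i r) j))
        (h' (cyclicGap x j) * ((if j = i - 1 then 1 else 0) - if j = i then 1 else 0)) (x i) :=
    fun j _ => HasDerivAt.comp (x i) (by simpa using hh j) (hasDerivAt_cyclicGap_update x i j)
  simpa [mul_sub] using HasDerivAt.fun_sum hterm

lemma sum_sub_one_eq_sum (a : Fin (n + 1) → ℝ) : ∑ i, a (i - 1) = ∑ i, a i :=
  Equiv.sum_comp (Equiv.subRight 1) a

lemma tangent_le_inv_cube {s : ℝ} (hs : 0 < s) : 1 / 8 - 3 * (s - 2) / 16 ≤ (s ^ 3)⁻¹ := by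
  rw [inv_eq_one_div, le_div_iff₀ (by positivity)]
  nlinarith [mul_nonneg (sq_nonneg (s - 2)) (by positivity : 0 ≤ 3 * s ^ 2 + 4 * s + 4)]

/-- The gap `g`, measured in units of the mean gap `1 / (n + 1)` and shifted away from `0`. -/
noncomputable def scaledGap (n : ℕ) (g : ℝ) : ℝ := ((n : ℝ) + 1) * g + 1

/-- The barrier used to bound the zero number of bounded entire solutions; its second derivatives
are large and negative once there are many points. -/
noncomputable def gapBarrier (x : Fin (n + 1) → ℝ) : ℝ :=
  2 - ∑ j, (((n : ℝ) + 1) * scaledGap n (cyclicGap x j))⁻¹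

/-- The first partial derivatives of `gapBarrier`. -/
noncomputable def gapBarrierDeriv (i : Fin (n + 1)) (x : Fin (n + 1) → ℝ) : ℝ :=
  (scaledGap n (cyclicGap x (i - 1)) ^ 2)⁻¹ - (scaledGap n (cyclicGap x i) ^ 2)⁻¹

/-- The second partial derivatives of `gapBarrier`. -/
noncomputable def gapBarrierDeriv₂ (i : Fin (n + 1)) (x : Fin (n + 1) → ℝ) : ℝ :=
  -(2 * ((n : ℝ) + 1) *
    ((scaledGap n (cyclicGap x (i - 1)) ^ 3)⁻¹ + (scaledGap n (cyclicGap x i) ^ 3)⁻¹))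

lemma one_le_scaledGap {g : ℝ} (hg : 0 ≤ g) : 1 ≤ scaledGap n g :=
  le_add_of_nonneg_left (by positivity)

lemma hasDerivAt_scaledGap (g : ℝ) : HasDerivAt (scaledGap n) ((n : ℝ) + 1) g := by
  exact (((hasDerivAt_id g).const_mul ((n : ℝ) + 1)).add_const 1).congr_deriv (mul_one _)

lemma gapBarrier_mem_Icc {x : Fin (n + 1) → ℝ} (hx : x ∈ cyclicConfig n) :
    gapBarrier x ∈ Icc (1 : ℝ) 2 := by
  have hpos : ∀ j, 0 < scaledGap n (cyclicGap x j) := fun j =>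
    one_pos.trans_le (one_le_scaledGap (hx j))
  have hnonneg : 0 ≤ ∑ j, (((n : ℝ) + 1) * scaledGap n (cyclicGap x j))⁻¹ :=
    Finset.sum_nonneg fun j _ => by have := hpos j; positivity
  have hle : ∑ j, (((n : ℝ) + 1) * scaledGap n (cyclicGap x j))⁻¹ ≤ 1 := by
    calc ∑ j, (((n : ℝ) + 1) * scaledGap n (cyclicGap x j))⁻¹
        ≤ ∑ _j : Fin (n + 1), ((n : ℝ) + 1)⁻¹ := Finset.sum_le_sum fun j _ =>
          inv_anti₀ (by positivity)
            (le_mul_of_one_le_right (by positivity) (one_le_scaledGap (hx j)))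
      _ = 1 := by
        simp only [Finset.sum_const, Finset.card_univ, Fintype.card_fin, nsmul_eq_mul]
        push_cast
        exact mul_inv_cancel₀ (by positivity)
  constructor <;> unfold gapBarrier <;> linarith

lemma continuousOn_gapBarrier : ContinuousOn (gapBarrier (n := n)) (cyclicConfig n) := by
  refine continuousOn_const.sub (continuousOn_finsetSum _ fun j _ => ContinuousOn.inv₀ ?_ ?_)
  · exact (continuous_const.mul
      ((continuous_const.mul (continuous_cyclicGap j)).add continuous_const)).continuousOn
  · intro x hx
    have := one_pos.trans_le (one_le_scaledGap (n := n) (hx j))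
    positivity

lemma hasDerivAt_gapBarrier {x : Fin (n + 1) → ℝ} (hx : ∀ j, 0 < cyclicGap x j)
    (i : Fin (n + 1)) :
    HasDerivAt (fun r => gapBarrier (Function.update x i r)) (gapBarrierDeriv i x) (x i) := by
  have hterm : ∀ j, HasDerivAt (fun g => (((n : ℝ) + 1) * scaledGap n g)⁻¹)
      (-(scaledGap n (cyclicGap x j) ^ 2)⁻¹) (cyclicGap x j) := by
    intro j
    have hne : scaledGap n (cyclicGap x j) ≠ 0 :=
      (one_pos.trans_le (one_le_scaledGap (hx j).le)).ne'
    refine (((hasDerivAt_scaledGap _).const_mul _).fun_inv (by positivity)).congr_deriv ?_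
    field_simp
  exact ((hasDerivAt_sum_comp_cyclicGap (h' := fun g => -(scaledGap n g ^ 2)⁻¹) x i
    hterm).const_sub 2).congr_deriv (by unfold gapBarrierDeriv; ring)

lemma hasDerivAt_gapBarrierDeriv (hn : n ≠ 0) {x : Fin (n + 1) → ℝ}
    (hx : ∀ j, 0 < cyclicGap x j) (i : Fin (n + 1)) :
    HasDerivAt (fun r => gapBarrierDeriv i (Function.update x i r)) (gapBarrierDeriv₂ i x)
      (x i) := by
  have : NeZero n := ⟨hn⟩
  have hi : i - 1 ≠ i := by simp
  have hterm : ∀ j, HasDerivAt (fun r => (scaledGap n (cyclicGap (Function.update x i r) j) ^ 2)⁻¹)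
      (-(2 * ((n : ℝ) + 1) * (scaledGap n (cyclicGap x j) ^ 3)⁻¹) *
        ((if j = i - 1 then 1 else 0) - if j = i then 1 else 0)) (x i) := by
    intro j
    have hne : scaledGap n (cyclicGap x j) ≠ 0 :=
      (one_pos.trans_le (one_le_scaledGap (hx j).le)).ne'
    refine HasDerivAt.comp (x i) (h₂ := fun g => (scaledGap n g ^ 2)⁻¹) ?_
      (hasDerivAt_cyclicGap_update x i j)
    rw [Function.update_eq_self]
    refine (((hasDerivAt_scaledGap _).fun_pow 2).fun_inv (by positivity)).congr_deriv ?_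
    field_simp
    ring
  refine ((hterm (i - 1)).sub (hterm i)).congr_deriv ?_
  simp only [if_true, if_neg hi, if_neg hi.symm, gapBarrierDeriv₂]
  ring

lemma sum_gapBarrierDeriv₂_le {x : Fin (n + 1) → ℝ} (hx : ∀ j, 0 < cyclicGap x j) :
    ∑ i, gapBarrierDeriv₂ i x ≤ -(((n : ℝ) + 1) ^ 2 / 2) := by
  set k : ℝ := (n : ℝ) + 1
  have hsum : ∑ i, gapBarrierDeriv₂ i x = -(4 * k * ∑ j, (scaledGap n (cyclicGap x j) ^ 3)⁻¹) := by
    simp only [gapBarrierDeriv₂, Finset.sum_neg_distrib, ← Finset.mul_sum, Finset.sum_add_distrib]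
    rw [sum_sub_one_eq_sum fun j => (scaledGap n (cyclicGap x j) ^ 3)⁻¹]
    ring
  have htangent : ∑ j, (1 / 8 - 3 * (scaledGap n (cyclicGap x j) - 2) / 16) = k / 8 := by
    have hterm : ∀ j, 1 / 8 - 3 * (scaledGap n (cyclicGap x j) - 2) / 16
        = 5 / 16 - 3 * k / 16 * cyclicGap x j := fun j => by
      simp only [scaledGap]
      ring
    simp only [hterm, Finset.sum_sub_distrib, ← Finset.mul_sum, sum_cyclicGap, Finset.sum_const,
      Finset.card_univ, Fintype.card_fin, nsmul_eq_mul]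
    push_cast
    ring
  have hle : k / 8 ≤ ∑ j, (scaledGap n (cyclicGap x j) ^ 3)⁻¹ :=
    htangent.symm.trans_le (Finset.sum_le_sum fun j _ =>
      tangent_le_inv_cube (one_pos.trans_le (one_le_scaledGap (hx j).le)))
  rw [hsum]
  nlinarith [(by positivity : 0 < k)]

lemma sum_abs_gapBarrierDeriv_le {x : Fin (n + 1) → ℝ} (hx : ∀ j, 0 < cyclicGap x j) :
    ∑ i, |gapBarrierDeriv i x| ≤ (n : ℝ) + 1 := by
  have hmem : ∀ j, (scaledGap n (cyclicGap x j) ^ 2)⁻¹ ∈ Icc (0 : ℝ) 1 := fun j =>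
    ⟨by positivity, inv_le_one_of_one_le₀ (one_le_pow₀ (one_le_scaledGap (hx j).le))⟩
  have hle : ∀ i ∈ Finset.univ, |gapBarrierDeriv i x| ≤ (1 : ℝ) := fun i _ =>
    (abs_sub_le_of_le_of_le (hmem (i - 1)).1 (hmem (i - 1)).2 (hmem i).1 (hmem i).2).trans_eq
      (sub_zero 1)
  simpa using Finset.sum_le_sum hle

lemma isBarrier_gapBarrier {C : ℝ} (hC : 0 ≤ C) (hn : 8 * C + 5 ≤ (n : ℝ) + 1) :
    IsBarrier C (-1) (gapBarrier (n := n)) gapBarrierDeriv gapBarrierDeriv₂ where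
  continuousOn := continuousOn_gapBarrier
  pos _ hx := one_pos.trans_le (gapBarrier_mem_Icc hx).1
  add_intCast x m := by simp only [gapBarrier, cyclicGap_add_const]
  hasDerivAt _ i hx := hasDerivAt_gapBarrier hx i
  hasDerivAt₂ _ i hx := by
    refine hasDerivAt_gapBarrierDeriv ?_ hx i
    rintro rfl
    norm_num at hn
    linarith
  sum_lt x hx := by
    have h₀ := (gapBarrier_mem_Icc fun j => (hx j).le).2
    have h₁ := sum_gapBarrierDeriv₂_le hx
    have h₂ := mul_le_mul_of_nonneg_left (sum_abs_gapBarrierDeriv_le hx) hC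
    have h₃ : ((n : ℝ) + 1) * (C * gapBarrier x) ≤ ((n : ℝ) + 1) * (C * 2) := by gcongr
    simp only [Finset.sum_add_distrib, ← Finset.mul_sum, Finset.sum_const, Finset.card_univ,
      Fintype.card_fin, nsmul_eq_mul]
    push_cast
    nlinarith

lemma ParabolicIneq.card_lt_of_isAlternating {C B : ℝ} {v vt vx vxx : ℝ → ℝ → ℝ}
    (hv : ParabolicIneq C v vt vx vxx) (hC : 0 ≤ C) (hB : ∀ t x, |v t x| ≤ B) {t' : ℝ}
    {x' : Fin (n + 1) → ℝ} (hx' : IsAlternating (v t') x') : (n : ℝ) + 1 < 8 * C + 5 := by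
  by_contra! hn
  set σ : Fin (n + 1) → ℝ := fun i => v t' (x' i)
  have hΨ := isBarrier_gapBarrier hC hn
  have hmem' : x' ∈ cyclicConfig n := fun j => (hx'.1 j).le
  have hpos : 0 < Real.exp (- -1 * t') * (alternatingProd σ (v t') x' / gapBarrier x') :=
    mul_pos (Real.exp_pos _) (div_pos hx'.alternatingProd_self_pos (hΨ.pos _ hmem'))
  have hle : ∀ t ≤ t', Real.exp (- -1 * t') * (alternatingProd σ (v t') x' / gapBarrier x')
      ≤ Real.exp t * ∏ i, |σ i| * B := by
    intro t ht
    obtain ⟨x, hx, hle⟩ := hv.exists_alternatingProd_ge hΨ hx'.2 ht hmem'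
      hx'.alternatingProd_self_pos
    rw [neg_neg, one_mul, one_mul] at *
    refine hle.trans (mul_le_mul_of_nonneg_left ?_ (Real.exp_pos _).le)
    exact (div_le_self (Finset.prod_nonneg fun i _ => le_max_right _ _)
      (gapBarrier_mem_Icc hx).1).trans (alternatingProd_le (hB t))
  have hlim : Tendsto (fun t => Real.exp t * ∏ i, |σ i| * B) atBot (𝓝 0) := by
    simpa using Real.tendsto_exp_atBot.mul_const (∏ i, |σ i| * B)
  exact hpos.not_ge (ge_of_tendsto hlim ((eventually_le_atBot t').mono hle))

theorem ParabolicIneq.zeroNumber_ne_top {C B : ℝ} {v vt vx vxx : ℝ → ℝ → ℝ}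
    (hv : ParabolicIneq C v vt vx vxx) (hC : 0 ≤ C) (hB : ∀ t x, |v t x| ≤ B) (t : ℝ) :
    zeroNumber (v t) ≠ ⊤ := by
  obtain ⟨N, hN⟩ := exists_nat_ge (8 * C + 5)
  refine ne_top_of_le_ne_top (ENat.natCast_ne_top N) (zeroNumber_le fun n x hx => ?_)
  have := (hv.card_lt_of_isAlternating hC hB hx).le.trans hN
  exact_mod_cast this

end Finiteness

section ExtraSignChanges

variable {n : ℕ} {φ : ℝ → ℝ}

/-- `φ` takes nonzero values of alternating signs at three successive points of `s`. -/
def TwoSignChangesOn (φ : ℝ → ℝ) (s : Set ℝ) : Prop :=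
  ∃ a ∈ s, ∃ b ∈ s, ∃ c ∈ s, a < b ∧ b < c ∧ φ a * φ b < 0 ∧ φ b * φ c < 0

lemma mul_pos_of_mul_neg_of_mul_neg {a b c : ℝ} (hab : a * b < 0) (hbc : b * c < 0) :
    0 < a * c := by
  have : 0 < (b * b) * (a * c) := by
    rw [← mul_assoc, mul_comm (b * b) a, ← mul_assoc, mul_assoc (a * b)]
    exact mul_pos_of_neg_of_neg hab hbc
  exact pos_of_mul_pos_right this (mul_self_nonneg b)

lemma mul_neg_of_mul_neg_of_mul_pos {a b c : ℝ} (hab : a * b < 0) (hbc : 0 < b * c) :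
    a * c < 0 := by
  have := mul_pos_of_mul_neg_of_mul_neg (c := -c) hab (by linarith)
  linarith

lemma isAlternating_iff {x : Fin (n + 1) → ℝ} :
    IsAlternating φ x ↔
      ((∀ i : Fin n, x i.castSucc < x i.succ) ∧ x (Fin.last n) < x 0 + 1) ∧
      (∀ i : Fin n, φ (x i.castSucc) * φ (x i.succ) < 0) ∧ φ (x (Fin.last n)) * φ (x 0) < 0 := by
  rw [IsAlternating, cyclicGap_pos_iff, Fin.strictMono_iff_lt_succ,
    Fin.forall_fin_succ' (P := fun i => φ (x i) * φ (x (i + 1)) < 0)]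
  simp [Fin.last_add_one]

lemma exists_isAlternating_of_zeroNumber_eq (h : zeroNumber φ = ((n + 1 : ℕ) : ℕ∞)) :
    ∃ x : Fin (n + 1) → ℝ, IsAlternating φ x := by
  have hlt : (n : ℕ∞) < zeroNumber φ := h ▸ ENat.natCast_lt_natCast.2 n.lt_succ_self
  obtain ⟨m, x, hx, hm⟩ : ∃ (m : ℕ) (x : Fin (m + 1) → ℝ),
      IsAlternating φ x ∧ (n : ℕ∞) < ((m + 1 : ℕ) : ℕ∞) := by
    by_contra! hcon
    exact hlt.not_ge (zeroNumber_le hcon)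
  have hle := h ▸ hx.le_zeroNumber
  obtain rfl : m = n := by
    have h₁ : n < m + 1 := by exact_mod_cast hm
    have h₂ : m + 1 ≤ n + 1 := by exact_mod_cast hle
    lia
  exact ⟨x, hx⟩

lemma IsAlternating.add_intCast (hper : Function.Periodic φ 1) {x : Fin (n + 1) → ℝ}
    (hx : IsAlternating φ x) (m : ℤ) : IsAlternating φ fun i => x i + m := by
  have hm : ∀ r, φ (r + m) = φ r := fun r => by simpa using hper.int_mul m r
  refine ⟨fun j => ?_, fun i => ?_⟩
  · rw [cyclicGap_add_const]
    exact hx.1 j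
  · simpa only [hm] using hx.2 i

lemma IsAlternating.rotate (hper : Function.Periodic φ 1) {x : Fin (n + 1) → ℝ}
    (hx : IsAlternating φ x) :
    IsAlternating φ fun i => x (i + 1) + if i = Fin.last n then 1 else 0 := by
  have hφ : ∀ i : Fin (n + 1),
      φ (x (i + 1) + if i = Fin.last n then 1 else 0) = φ (x (i + 1)) := by
    intro i
    split_ifs
    · exact hper _
    · rw [add_zero]
  refine ⟨fun j => ?_, fun i => ?_⟩
  · have := hx.1 (j + 1)
    unfold cyclicGap at this ⊢
    linarith
  · simpa only [hφ] using hx.2 (i + 1)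

/-- Induction on the number `m` of points which may still lie to the left of `z`: each rotation
moves one of them to the right. -/
lemma IsAlternating.exists_rotate_gt (hper : Function.Periodic φ 1) {z : ℝ} (hz : φ z = 0)
    {x : Fin (n + 1) → ℝ} (hx : IsAlternating φ x) (hlast : x (Fin.last n) < z + 1)
    (hfirst : z < x 0 + 1) (m : ℕ) (hm : ∀ i : Fin (n + 1), m ≤ i.val → z < x i) :
    ∃ y : Fin (n + 1) → ℝ, IsAlternating φ y ∧ z < y 0 ∧ y (Fin.last n) < z + 1 := by
  induction m generalizing x with
  | zero => exact ⟨x, hx, hm 0 (Nat.zero_le _), hlast⟩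
  | succ m ih =>
    rcases lt_trichotomy z (x 0) with hlt | heq | hgt
    · exact ⟨x, hx, hlt, hlast⟩
    · have := hx.2 0
      rw [← heq, hz, zero_mul] at this
      exact absurd this (lt_irrefl _)
    · have hmono := (cyclicGap_pos_iff.1 hx.1).1.monotone
      refine ih (hx.rotate hper) ?_ ?_ fun i hi => ?_
      · simpa [Fin.last_add_one] using hgt
      · have := hmono (Fin.zero_le (0 + 1))
        split_ifs <;> linarith
      · split_ifs with hi_last
        · rwa [hi_last, Fin.last_add_one]
        · rw [add_zero]
          refine hm (i + 1) ?_
          rw [Fin.val_add_one_of_lt (Fin.lt_last_iff_ne_last.2 hi_last)]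
          lia

lemma IsAlternating.exists_mem_Ioo_of_eq_zero (hper : Function.Periodic φ 1) {z : ℝ}
    (hz : φ z = 0) {x : Fin (n + 1) → ℝ} (hx : IsAlternating φ x) :
    ∃ y : Fin (n + 1) → ℝ, IsAlternating φ y ∧ z < y 0 ∧ y (Fin.last n) < z + 1 := by
  have h₁ := Int.floor_le (x (Fin.last n) - z)
  have h₂ := Int.lt_floor_add_one (x (Fin.last n) - z)
  have h₃ := (cyclicGap_pos_iff.1 hx.1).2
  refine (hx.add_intCast hper (-⌊x (Fin.last n) - z⌋)).exists_rotate_gt hper hz ?_ ?_ (n + 1)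
    fun i hi => absurd i.2 hi.not_gt
  · push_cast
    linarith
  · push_cast
    linarith

lemma IsAlternating.cons_cons {y : Fin (n + 1) → ℝ} (hy : IsAlternating φ y) {a b : ℝ}
    (hab : a < b) (hby : b < y 0) (hya : y (Fin.last n) < a + 1) (hφab : φ a * φ b < 0)
    (hφby : φ b * φ (y 0) < 0) :
    IsAlternating φ (Fin.cons a (Fin.cons b y : Fin (n + 2) → ℝ) : Fin (n + 3) → ℝ) := by
  obtain ⟨⟨hmono, -⟩, halt, hwrap⟩ := isAlternating_iff.1 hy
  have hlast : Fin.last (n + 2) = (Fin.last n).succ.succ := rfl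
  rw [isAlternating_iff]
  refine ⟨⟨?_, ?_⟩, ?_, ?_⟩
  · refine Fin.cases ?_ (Fin.cases ?_ fun i => ?_)
    · simpa using hab
    · exact hby
    · simpa [← Fin.succ_castSucc] using hmono i
  · rw [hlast]
    simpa using hya
  · refine Fin.cases ?_ (Fin.cases ?_ fun i => ?_)
    · simpa using hφab
    · exact hφby
    · simpa [← Fin.succ_castSucc] using halt i
  · have hφya : φ (y (Fin.last n)) * φ a < 0 := by
      have := mul_pos_of_mul_neg_of_mul_neg hφab hφby
      exact mul_neg_of_mul_neg_of_mul_pos hwrap (by rwa [mul_comm])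
    rw [hlast]
    simpa using hφya

lemma two_le_zeroNumber {a b : ℝ} (hab : a < b) (hba : b < a + 1) (h : φ a * φ b < 0) :
    2 ≤ zeroNumber φ := by
  have hpair : IsAlternating φ ![a, b] := by
    rw [isAlternating_iff]
    simp [show Fin.last 1 = 1 from rfl, hab, hba, h, mul_comm (φ b)]
  exact_mod_cast hpair.le_zeroNumber

/-- Of the three points, either the last two or the first two continue the sign pattern of `y`. -/
lemma IsAlternating.add_three_le_zeroNumber {y : Fin (n + 1) → ℝ} (hy : IsAlternating φ y)
    {s : Set ℝ} (hs : ∀ r ∈ s, r < y 0 ∧ y (Fin.last n) < r + 1) (h : TwoSignChangesOn φ s) :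
    ((n + 3 : ℕ) : ℕ∞) ≤ zeroNumber φ := by
  obtain ⟨a, ha, b, hb, c, hc, hab, hbc, hφab, hφbc⟩ := h
  have hne : φ c * φ (y 0) ≠ 0 :=
    mul_ne_zero (right_ne_zero_of_mul hφbc.ne) (left_ne_zero_of_mul (hy.2 0).ne)
  rcases hne.lt_or_gt with hneg | hpos
  · exact (hy.cons_cons hbc (hs c hc).1 (hs b hb).2 hφbc hneg).le_zeroNumber
  · exact (hy.cons_cons hab (hs b hb).1 (hs a ha).2 hφab
      (mul_neg_of_mul_neg_of_mul_pos hφbc hpos)).le_zeroNumber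

lemma frequently_zeroNumber_add_two_le {T : Type*} {l : Filter T} {v : T → ℝ → ℝ}
    (hper : Function.Periodic φ 1) (hfin : zeroNumber φ ≠ ⊤) {z : ℝ} (hz : φ z = 0)
    (hlim : Tendsto v l (𝓝 φ))
    (hfreq : ∀ r > 0, ∃ᶠ t in l, TwoSignChangesOn (v t) (Icc (z - r) (z + r))) :
    ∃ᶠ t in l, zeroNumber φ + 2 ≤ zeroNumber (v t) := by
  obtain ⟨m, hm⟩ := ENat.ne_top_iff_exists.1 hfin
  rcases m with _ | n
  · refine (hfreq (1 / 4) (by norm_num)).mono fun t ⟨a, ha, b, hb, _, _, hab, _, hφab, _⟩ => ?_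
    rw [← hm]
    simpa using two_le_zeroNumber hab (by linarith [ha.1, hb.2]) hφab
  · obtain ⟨x, hx⟩ := exists_isAlternating_of_zeroNumber_eq hm.symm
    obtain ⟨y, hy, hzy, hyz⟩ := hx.exists_mem_Ioo_of_eq_zero hper hz
    obtain ⟨r, hr, hr_lt⟩ := exists_between (lt_min (sub_pos.2 hzy) (sub_pos.2 hyz))
    rw [lt_min_iff] at hr_lt
    refine ((hfreq r hr).and_eventually (hlim.eventually hy.eventually)).mono fun t ⟨h, hyt⟩ => ?_
    have := hyt.add_three_le_zeroNumber
      (fun q hq => ⟨by linarith [hq.2, hr_lt.1], by linarith [hq.1, hr_lt.2]⟩) h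
    rw [← hm]
    exact_mod_cast this

end ExtraSignChanges

section Recurrence

lemma eq_of_antitone_of_mapClusterPt {X Y : Type*} [TopologicalSpace X]
    [LinearOrder Y] {F : X → Y} (hF : LowerSemicontinuous F) {v : ℝ → X}
    (hanti : Antitone fun t => F (v t)) (hrec : ∀ t, MapClusterPt (v t) atTop v) (s t : ℝ) :
    F (v s) = F (v t) := by
  have hle : ∀ s t, F (v t) ≤ F (v s) := fun s t => by
    by_contra! hlt
    obtain ⟨t', ht', hst'⟩ :=
      (((hrec t).frequently (hF _ _ hlt)).and_eventually (eventually_ge_atTop s)).exists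
    exact (hanti hst').not_gt ht'
  exact le_antisymm (hle t s) (hle s t)

/-- At the times `t + n p₁` the first term is constant, and `n p₁` returns arbitrarily close to `0`
modulo `p₂`. -/
lemma mapClusterPt_sub_of_periodic {E : Type*} [AddGroup E] [TopologicalSpace E]
    [ContinuousSub E] {g₁ g₂ : ℝ → E} {p₁ p₂ : ℝ} (h₁ : Function.Periodic g₁ p₁)
    (h₂ : Function.Periodic g₂ p₂) (hp₁ : 0 < p₁) (hp₂ : 0 < p₂) (hg₂ : Continuous g₂) (t : ℝ) :
    MapClusterPt (g₁ t - g₂ t) atTop fun s => g₁ s - g₂ s := by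
  have : Fact (0 < p₂) := ⟨hp₂⟩
  let lift : AddCircle p₂ → E := h₂.lift
  have hlift : Continuous lift := hg₂.quotient_lift _
  have hreturn : MapClusterPt (g₁ t - lift (t + 0)) atTop
      fun n : ℕ => g₁ t - lift (t + n • (p₁ : AddCircle p₂)) :=
    (mapClusterPt_zero_atTop_nsmul (p₁ : AddCircle p₂)).continuousAt_comp
      (f := fun z => g₁ t - lift (t + z)) (by fun_prop)
  have htime : Tendsto (fun n : ℕ => t + n * p₁) atTop atTop :=
    tendsto_atTop_add_const_left _ t (tendsto_natCast_atTop_atTop.atTop_mul_const hp₁)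
  refine .of_comp (φ := fun n : ℕ => t + n * p₁) htime ?_
  convert! hreturn using 1
  · rw [add_zero]; rfl
  · funext n
    simp only [Function.comp_apply, h₁.nat_mul n t]
    rw [← nsmul_eq_mul]
    rfl

end Recurrence

section GaussianIntegrals

open MeasureTheory ProbabilityTheory
open scoped NNReal

lemma hasDerivAt_gaussianPDFReal (μ : ℝ) (v : ℝ≥0) (y : ℝ) :
    HasDerivAt (gaussianPDFReal μ v) (-((y - μ) / v) * gaussianPDFReal μ v y) y := by
  have hexp := ((((hasDerivAt_id y).sub_const μ).fun_pow 2).fun_neg.div_const (2 * (v : ℝ))).exp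
  simp only [gaussianPDFReal_def]
  refine (hexp.const_mul (√(2 * Real.pi * v))⁻¹).congr_deriv ?_
  simp only [id]
  ring

lemma integrable_gaussianReal_iff {μ : ℝ} {v : ℝ≥0} (hv : v ≠ 0) {f : ℝ → ℝ} :
    Integrable f (gaussianReal μ v) ↔ Integrable fun y => gaussianPDFReal μ v y * f y := by
  rw [gaussianReal_of_var_ne_zero μ hv, integrable_withDensity_iff_integrable_smul'
    (measurable_gaussianPDF μ v) (ae_of_all _ fun _ => gaussianPDF_lt_top)]
  simp only [toReal_gaussianPDF, smul_eq_mul]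

/-- Gaussian integration by parts (Stein's identity). -/
lemma integral_sub_mul_gaussianReal {μ : ℝ} {v : ℝ≥0} (hv : v ≠ 0) {g g' : ℝ → ℝ}
    (hderiv : ∀ y, HasDerivAt g (g' y) y) (hg : Integrable g (gaussianReal μ v))
    (hg' : Integrable g' (gaussianReal μ v))
    (hyg : Integrable (fun y => (y - μ) * g y) (gaussianReal μ v)) :
    ∫ y, (y - μ) * g y ∂gaussianReal μ v = v * ∫ y, g' y ∂gaussianReal μ v := by
  have hv' : (v : ℝ) ≠ 0 := by exact_mod_cast hv
  have hprod : ∀ y, HasDerivAt (fun y => gaussianPDFReal μ v y * g y)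
      (gaussianPDFReal μ v y * (g' y - (v : ℝ)⁻¹ * ((y - μ) * g y))) y := fun y =>
    ((hasDerivAt_gaussianPDFReal μ v y).fun_mul (hderiv y)).congr_deriv (by field_simp; ring)
  have hint := hg'.sub (hyg.const_mul (v : ℝ)⁻¹)
  have hzero : ∫ y, (g' y - (v : ℝ)⁻¹ * ((y - μ) * g y)) ∂gaussianReal μ v = 0 := by
    rw [integral_gaussianReal_eq_integral_smul hv]
    exact integral_eq_zero_of_hasDerivAt_of_integrable hprod
      ((integrable_gaussianReal_iff hv).1 hint) ((integrable_gaussianReal_iff hv).1 hg)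
  rw [integral_sub hg' (hyg.const_mul _), integral_const_mul, sub_eq_zero] at hzero
  rw [hzero]
  field_simp

lemma sq_integral_mul_le {α : Type*} [MeasurableSpace α] {μ : Measure α} {f g : α → ℝ}
    (hf : MemLp f 2 μ) (hg : MemLp g 2 μ) :
    (∫ a, f a * g a ∂μ) ^ 2 ≤ (∫ a, f a ^ 2 ∂μ) * ∫ a, g a ^ 2 ∂μ := by
  have hfg : Integrable (fun a => f a * g a) μ := hf.integrable_mul hg
  have hquad : ∀ t : ℝ, 0 ≤ (∫ a, f a ^ 2 ∂μ) * (t * t) + 2 * (∫ a, f a * g a ∂μ) * t +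
      ∫ a, g a ^ 2 ∂μ := fun t => calc
    0 ≤ ∫ a, (t * f a + g a) ^ 2 ∂μ := integral_nonneg fun a => sq_nonneg _
    _ = ∫ a, (t * t * f a ^ 2 + 2 * t * (f a * g a) + g a ^ 2) ∂μ := by
      congr with a
      ring
    _ = _ := by
      have hf2 := hf.integrable_sq.const_mul (t * t)
      have hfg2 := hfg.const_mul (2 * t)
      rw [integral_add, integral_add hf2 hfg2, integral_const_mul, integral_const_mul]
      · ring
      · exact hf2.add hfg2
      · exact hg.integrable_sq
  have := discrim_le_zero hquad
  rw [discrim] at this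
  linarith

lemma integral_abs_mul_le_sqrt_mul_sqrt {α : Type*} [MeasurableSpace α] {μ : Measure α}
    {f g : α → ℝ} (hf : MemLp f 2 μ) (hg : MemLp g 2 μ) :
    ∫ a, |f a * g a| ∂μ ≤ √(∫ a, f a ^ 2 ∂μ) * √(∫ a, g a ^ 2 ∂μ) := by
  rw [← Real.sqrt_mul (integral_nonneg fun a => sq_nonneg _)]
  refine Real.le_sqrt_of_sq_le ?_
  simpa only [abs_mul, Pi.abs_apply, sq_abs] using sq_integral_mul_le hf.abs hg.abs

/-- Continuous functions of at most polynomial growth: an algebra of functions which are integrable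
for every Gaussian measure. -/
@[fun_prop]
def PolyGrowth (f : ℝ → ℝ) : Prop :=
  Continuous f ∧ ∃ (A : ℝ) (m : ℕ), ∀ y, |f y| ≤ A * (1 + y ^ 2) ^ m

namespace PolyGrowth

variable {f g : ℝ → ℝ}

@[fun_prop]
lemma const (c : ℝ) : PolyGrowth fun _ => c :=
  ⟨continuous_const, |c|, 0, by simp⟩

@[fun_prop]
lemma id : PolyGrowth fun y => y :=
  ⟨continuous_id, 1, 1, fun y => abs_le.2
    ⟨by nlinarith [sq_nonneg (y + 1)], by nlinarith [sq_nonneg (y - 1)]⟩⟩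

@[fun_prop]
lemma add (hf : PolyGrowth f) (hg : PolyGrowth g) : PolyGrowth fun y => f y + g y := by
  obtain ⟨hf, A, m, hA⟩ := hf
  obtain ⟨hg, B, k, hB⟩ := hg
  refine ⟨hf.add hg, |A| + |B|, m + k, fun y => ?_⟩
  have hone : (1 : ℝ) ≤ 1 + y ^ 2 := by linarith [sq_nonneg y]
  calc |f y + g y| ≤ |f y| + |g y| := abs_add_le _ _
    _ ≤ |A| * (1 + y ^ 2) ^ m + |B| * (1 + y ^ 2) ^ k := by
      gcongr
      · exact (hA y).trans (by gcongr; exact le_abs_self A)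
      · exact (hB y).trans (by gcongr; exact le_abs_self B)
    _ ≤ |A| * (1 + y ^ 2) ^ (m + k) + |B| * (1 + y ^ 2) ^ (m + k) := by
      gcongr <;> lia
    _ = (|A| + |B|) * (1 + y ^ 2) ^ (m + k) := by ring

@[fun_prop]
lemma mul (hf : PolyGrowth f) (hg : PolyGrowth g) : PolyGrowth fun y => f y * g y := by
  obtain ⟨hf, A, m, hA⟩ := hf
  obtain ⟨hg, B, k, hB⟩ := hg
  refine ⟨hf.mul hg, A * B, m + k, fun y => ?_⟩
  calc |f y * g y| = |f y| * |g y| := abs_mul _ _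
    _ ≤ A * (1 + y ^ 2) ^ m * (B * (1 + y ^ 2) ^ k) :=
      mul_le_mul (hA y) (hB y) (abs_nonneg _) ((abs_nonneg _).trans (hA y))
    _ = A * B * (1 + y ^ 2) ^ (m + k) := by ring

@[fun_prop]
lemma sub (hf : PolyGrowth f) (hg : PolyGrowth g) : PolyGrowth fun y => f y - g y := by
  simpa [sub_eq_add_neg] using hf.add ((const (-1)).mul hg)

@[fun_prop]
lemma div_const (hf : PolyGrowth f) (c : ℝ) : PolyGrowth fun y => f y / c :=
  hf.mul (const c⁻¹)

@[fun_prop]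
lemma pow (hf : PolyGrowth f) (n : ℕ) : PolyGrowth fun y => f y ^ n := by
  induction n with
  | zero => simpa using const 1
  | succ n ih => simpa only [pow_succ] using ih.mul hf

@[fun_prop]
lemma abs (hf : PolyGrowth f) : PolyGrowth fun y => |f y| :=
  ⟨hf.1.abs, by simpa only [abs_abs] using hf.2⟩

lemma integrable {μ : ℝ} {v : ℝ≥0} (hf : PolyGrowth f) : Integrable f (gaussianReal μ v) := by
  obtain ⟨hf, A, m, hA⟩ := hf
  have hpow : Integrable (fun y : ℝ => (1 + y ^ 2) ^ m) (gaussianReal μ v) := by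
    have hexpand : (fun y : ℝ => (1 + y ^ 2) ^ m) =
        fun y => ∑ j ∈ Finset.range (m + 1), y ^ (2 * j) * (m.choose j : ℝ) := by
      funext y
      simp only [add_comm (1 : ℝ), add_pow, one_pow, mul_one, pow_mul]
    rw [hexpand]
    refine integrable_finsetSum _ fun j _ => Integrable.mul_const ?_ _
    have hmem : MemLp _root_.id (2 * j : ℕ) (gaussianReal μ v) := by
      exact_mod_cast memLp_id_gaussianReal (2 * j : ℕ)
    simpa [pow_mul] using hmem.integrable_norm_pow'
  exact (hpow.const_mul A).mono' hf.aestronglyMeasurable (ae_of_all _ hA)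

lemma memLp_two {μ : ℝ} {v : ℝ≥0} (hf : PolyGrowth f) : MemLp f 2 (gaussianReal μ v) :=
  (memLp_two_iff_integrable_sq hf.1.aestronglyMeasurable).2 ((hf.pow 2).integrable)

end PolyGrowth

/-- The invariant probability measure of the Ornstein-Uhlenbeck operator `∂² - (y / 2) ∂`, with
density proportional to `exp (-y² / 4)`. -/
noncomputable abbrev ouMeasure : Measure ℝ := gaussianReal 0 2

lemma integral_mul_ouMeasure {g g' : ℝ → ℝ} (hderiv : ∀ y, HasDerivAt g (g' y) y)
    (hg : PolyGrowth g) (hg' : PolyGrowth g') :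
    ∫ y, y * g y ∂ouMeasure = 2 * ∫ y, g' y ∂ouMeasure := by
  simpa using integral_sub_mul_gaussianReal (v := 2) (μ := 0) two_ne_zero hderiv hg.integrable
    hg'.integrable (PolyGrowth.integrable (by fun_prop))

/-- The Gaussian frequency `∫ u'² / ∫ u²` of `u`, a function of polynomial growth with derivative
`ux`, is at most `M`. -/
structure HasFrequencyLE (M : ℝ) (u ux : ℝ → ℝ) : Prop where
  hasDerivAt : ∀ y, HasDerivAt u (ux y) y
  polyGrowth : PolyGrowth u
  polyGrowth_deriv : PolyGrowth ux
  integral_deriv_sq_le : ∫ y, ux y ^ 2 ∂ouMeasure ≤ M * ∫ y, u y ^ 2 ∂ouMeasure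

variable {M : ℝ} {u ux : ℝ → ℝ}

lemma integral_sq_mul_sq_le (hderiv : ∀ y, HasDerivAt u (ux y) y) (hu : PolyGrowth u)
    (hux : PolyGrowth ux) :
    ∫ y, y ^ 2 * u y ^ 2 ∂ouMeasure ≤
      4 * ∫ y, u y ^ 2 ∂ouMeasure + 16 * ∫ y, ux y ^ 2 ∂ouMeasure := by
  have hstein : ∫ y, y * (y * u y ^ 2) ∂ouMeasure =
      2 * ∫ y, (u y ^ 2 + 2 * y * u y * ux y) ∂ouMeasure :=
    integral_mul_ouMeasure
      (fun y => ((hasDerivAt_id' y).fun_mul ((hderiv y).fun_pow 2)).congr_deriv (by simp; ring))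
      (by fun_prop) (by fun_prop)
  have hmono : 2 * ∫ y, (u y ^ 2 + 2 * y * u y * ux y) ∂ouMeasure ≤
      ∫ y, (y ^ 2 * u y ^ 2 / 2 + (2 * u y ^ 2 + 8 * ux y ^ 2)) ∂ouMeasure := by
    rw [← integral_const_mul]
    refine integral_mono (PolyGrowth.integrable (by fun_prop))
      (PolyGrowth.integrable (by fun_prop)) fun y => ?_
    linarith [sq_nonneg (y * u y - 4 * ux y)]
  rw [← hstein, integral_add, integral_add, integral_div, integral_const_mul,
    integral_const_mul] at hmono
  · simp only [← mul_assoc, ← pow_two] at hmono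
    linarith
  all_goals exact PolyGrowth.integrable (by fun_prop)

/-- Integrate `(w g)' = w (g' - y g / 2)` from `-∞` to `y`, where `w` is the density. -/
lemma gaussianPDFReal_mul_le_integral {g g' b : ℝ → ℝ} (hderiv : ∀ y, HasDerivAt g (g' y) y)
    (hg : PolyGrowth g) (hg' : PolyGrowth g') (hb : PolyGrowth b)
    (hle : ∀ y, |g' y - y * g y / 2| ≤ b y) (y : ℝ) :
    gaussianPDFReal 0 2 y * g y ≤ ∫ y, b y ∂ouMeasure := by
  set w := gaussianPDFReal 0 2
  have hw : ∀ y, 0 ≤ w y := gaussianPDFReal_nonneg 0 2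
  have hprod : ∀ y, HasDerivAt (fun y => w y * g y) (w y * (g' y - y * g y / 2)) y := fun y =>
    ((hasDerivAt_gaussianPDFReal 0 2 y).fun_mul (hderiv y)).congr_deriv (by simp; ring)
  have hint : ∀ {g}, PolyGrowth g → Integrable fun y => w y * g y := fun hg =>
    (integrable_gaussianReal_iff two_ne_zero).1 hg.integrable
  have hint_deriv := hint (g := fun y => g' y - y * g y / 2) (by fun_prop)
  have hlim := tendsto_zero_of_hasDerivAt_of_integrableOn_Iic (a := y) (fun y _ => hprod y)
    hint_deriv.integrableOn (hint hg).integrableOn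
  calc w y * g y = ∫ y in Iic y, w y * (g' y - y * g y / 2) := by
        rw [integral_Iic_of_hasDerivAt_of_tendsto' (fun y _ => hprod y) hint_deriv.integrableOn
          hlim, sub_zero]
    _ ≤ ∫ y in Iic y, w y * b y :=
        integral_mono hint_deriv.integrableOn (hint hb).integrableOn fun y =>
          mul_le_mul_of_nonneg_left (le_of_abs_le (hle y)) (hw y)
    _ ≤ ∫ y, w y * b y :=
        setIntegral_le_integral (hint hb)
          (ae_of_all _ fun y => mul_nonneg (hw y) ((abs_nonneg _).trans (hle y)))
    _ = ∫ y, b y ∂ouMeasure := (integral_gaussianReal_eq_integral_smul two_ne_zero).symm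

lemma HasFrequencyLE.gaussianPDFReal_mul_sq_le (h : HasFrequencyLE M u ux) (y : ℝ) :
    gaussianPDFReal 0 2 y * u y ^ 2 ≤ (5 + 5 * M) * ∫ y, u y ^ 2 ∂ouMeasure := by
  obtain ⟨hderiv, hu, hux, hM⟩ := h
  calc gaussianPDFReal 0 2 y * u y ^ 2
      ≤ ∫ y, (5 / 4 * u y ^ 2 + ux y ^ 2 + y ^ 2 * u y ^ 2 / 4) ∂ouMeasure :=
        gaussianPDFReal_mul_le_integral (g' := fun y => 2 * u y * ux y)
          (fun y => ((hderiv y).fun_pow 2).congr_deriv (by simp))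
          (by fun_prop) (by fun_prop) (by fun_prop)
          (fun y => abs_le.2
            ⟨by linarith [sq_nonneg (u y + ux y), sq_nonneg ((y - 1) * u y)],
              by linarith [sq_nonneg (u y - ux y), sq_nonneg ((y + 1) * u y)]⟩) y
    _ = 5 / 4 * ∫ y, u y ^ 2 ∂ouMeasure + ∫ y, ux y ^ 2 ∂ouMeasure +
          (∫ y, y ^ 2 * u y ^ 2 ∂ouMeasure) / 4 := by
        rw [integral_add, integral_add, integral_div, integral_const_mul]
        all_goals exact PolyGrowth.integrable (by fun_prop)
    _ ≤ (5 + 5 * M) * ∫ y, u y ^ 2 ∂ouMeasure := by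
        have : 0 ≤ ∫ y, u y ^ 2 ∂ouMeasure := integral_nonneg fun y => sq_nonneg _
        linarith [integral_sq_mul_sq_le hderiv hu hux]

end GaussianIntegrals

section TwoSignChanges

open MeasureTheory ProbabilityTheory

variable {M : ℝ} {u ux : ℝ → ℝ}

lemma HasFrequencyLE.setIntegral_Ioo_sq_le (h : HasFrequencyLE M u ux) {r : ℝ} (hr : 0 ≤ r)
    (c : ℝ) :
    ∫ y in Ioo (c - r) (c + r), u y ^ 2 ∂ouMeasure ≤
      2 * r * ((5 + 5 * M) * ∫ y, u y ^ 2 ∂ouMeasure) := by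
  have hint : Integrable fun y => gaussianPDFReal 0 2 y * u y ^ 2 :=
    (integrable_gaussianReal_iff two_ne_zero).1 (h.polyGrowth.pow 2).integrable
  calc ∫ y in Ioo (c - r) (c + r), u y ^ 2 ∂ouMeasure
      = ∫ y in Ioo (c - r) (c + r), gaussianPDFReal 0 2 y * u y ^ 2 := by
        rw [ouMeasure, gaussianReal_of_var_ne_zero 0 two_ne_zero,
          setIntegral_withDensity_eq_setIntegral_toReal_smul (measurable_gaussianPDF 0 2)
            (ae_of_all _ fun _ => gaussianPDF_lt_top) _ measurableSet_Ioo]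
        simp only [toReal_gaussianPDF, smul_eq_mul]
    _ ≤ ∫ _ in Ioo (c - r) (c + r), (5 + 5 * M) * ∫ y, u y ^ 2 ∂ouMeasure :=
        integral_mono hint.integrableOn (integrable_const _) h.gaussianPDFReal_mul_sq_le
    _ = 2 * r * ((5 + 5 * M) * ∫ y, u y ^ 2 ∂ouMeasure) := by
        rw [setIntegral_const, Real.volume_real_Ioo_of_le (by linarith), smul_eq_mul]
        ring

lemma gaussianPDFReal_zero_le_of_sq_le {v : NNReal} {x y : ℝ} (h : x ^ 2 ≤ y ^ 2) :
    gaussianPDFReal 0 v y ≤ gaussianPDFReal 0 v x := by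
  simp only [gaussianPDFReal_def, sub_zero]
  gcongr

lemma HasFrequencyLE.abs_le (h : HasFrequencyLE M u ux) {R y : ℝ} (hy : y ^ 2 ≤ R ^ 2) :
    |u y| ≤ √((5 + 5 * M) / gaussianPDFReal 0 2 R) * √(∫ y, u y ^ 2 ∂ouMeasure) := by
  have hR := gaussianPDFReal_pos 0 2 R two_ne_zero
  rw [← Real.sqrt_mul' _ (integral_nonneg fun y => sq_nonneg _)]
  refine Real.abs_le_sqrt ?_
  rw [div_mul_eq_mul_div, le_div_iff₀' hR]
  exact (mul_le_mul_of_nonneg_right (gaussianPDFReal_zero_le_of_sq_le hy) (sq_nonneg _)).trans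
    (h.gaussianPDFReal_mul_sq_le y)

lemma HasFrequencyLE.sq_le_of_le_abs_sub (h : HasFrequencyLE M u ux) {R r c y : ℝ} (hR : 0 < R)
    (hr : 0 < r) (hy : r ≤ |y - c|) :
    u y ^ 2 ≤ y ^ 2 * u y ^ 2 / R ^ 2 + √((5 + 5 * M) / gaussianPDFReal 0 2 R) *
      √(∫ y, u y ^ 2 ∂ouMeasure) / r * (|y - c| * |u y|) := by
  set b := √((5 + 5 * M) / gaussianPDFReal 0 2 R) * √(∫ y, u y ^ 2 ∂ouMeasure)
  rcases le_total (y ^ 2) (R ^ 2) with hyR | hyR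
  · calc u y ^ 2 = |u y| * |u y| := by rw [← sq_abs, pow_two]
      _ ≤ b * (|y - c| / r * |u y|) := by
        gcongr
        · exact h.abs_le hyR
        · exact le_mul_of_one_le_left (abs_nonneg _) ((one_le_div hr).2 hy)
      _ = b / r * (|y - c| * |u y|) := by ring
      _ ≤ y ^ 2 * u y ^ 2 / R ^ 2 + b / r * (|y - c| * |u y|) :=
        le_add_of_nonneg_left (by positivity)
  · calc u y ^ 2 ≤ y ^ 2 * u y ^ 2 / R ^ 2 := by
          rw [le_div_iff₀' (by positivity)]
          gcongr
      _ ≤ y ^ 2 * u y ^ 2 / R ^ 2 + b / r * (|y - c| * |u y|) :=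
        le_add_of_nonneg_right (by positivity)

lemma HasFrequencyLE.setIntegral_compl_Ioo_sq_le (h : HasFrequencyLE M u ux) {R r : ℝ} (hR : 0 < R)
    (hr : 0 < r) (c : ℝ) :
    ∫ y in (Ioo (c - r) (c + r))ᶜ, u y ^ 2 ∂ouMeasure ≤
      (4 + 16 * M) * (∫ y, u y ^ 2 ∂ouMeasure) / R ^ 2 + √((5 + 5 * M) / gaussianPDFReal 0 2 R) *
        √(∫ y, u y ^ 2 ∂ouMeasure) / r * ∫ y, |y - c| * |u y| ∂ouMeasure := by
  set b := √((5 + 5 * M) / gaussianPDFReal 0 2 R) * √(∫ y, u y ^ 2 ∂ouMeasure)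
  obtain ⟨hderiv, hu, hux, hle⟩ := id h
  calc ∫ y in (Ioo (c - r) (c + r))ᶜ, u y ^ 2 ∂ouMeasure
      ≤ ∫ y in (Ioo (c - r) (c + r))ᶜ,
          (y ^ 2 * u y ^ 2 / R ^ 2 + b / r * (|y - c| * |u y|)) ∂ouMeasure :=
        setIntegral_mono_on (PolyGrowth.integrable (by fun_prop)).integrableOn
          (PolyGrowth.integrable (by fun_prop)).integrableOn measurableSet_Ioo.compl fun y hy =>
            h.sq_le_of_le_abs_sub hR hr (le_of_not_gt fun hlt =>
              hy ⟨by linarith [abs_lt.1 hlt], by linarith [abs_lt.1 hlt]⟩)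
    _ ≤ ∫ y, (y ^ 2 * u y ^ 2 / R ^ 2 + b / r * (|y - c| * |u y|)) ∂ouMeasure :=
        setIntegral_le_integral (PolyGrowth.integrable (by fun_prop))
          (ae_of_all _ fun y => by positivity)
    _ = (∫ y, y ^ 2 * u y ^ 2 ∂ouMeasure) / R ^ 2 + b / r * ∫ y, |y - c| * |u y| ∂ouMeasure := by
        rw [integral_add, integral_div, integral_const_mul]
        all_goals exact PolyGrowth.integrable (by fun_prop)
    _ ≤ _ := by
        gcongr
        linarith [integral_sq_mul_sq_le hderiv hu hux]

/-- At most a quarter of the mass of `u²` lies in a small interval around `c`, at most a quarter in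
`{y² > R²}`, and on the remaining set `u` is bounded. -/
lemma HasFrequencyLE.exists_sqrt_integral_sq_le (hM : 0 ≤ M) :
    ∃ c₀ > 0, ∀ {u ux : ℝ → ℝ}, HasFrequencyLE M u ux → ∀ c : ℝ,
      c₀ * √(∫ y, u y ^ 2 ∂ouMeasure) ≤ ∫ y, |y - c| * |u y| ∂ouMeasure := by
  set R := √(16 + 64 * M)
  set r := 1 / (8 * (5 + 5 * M)) with hr_def
  set k := √((5 + 5 * M) / gaussianPDFReal 0 2 R)
  have hR : R ^ 2 = 16 + 64 * M := Real.sq_sqrt (by positivity)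
  have hr : 0 < r := by positivity
  have hk : 0 < k :=
    Real.sqrt_pos.2 (div_pos (by positivity) (gaussianPDFReal_pos 0 2 R two_ne_zero))
  refine ⟨r / (2 * k), by positivity, fun {u ux} h c => ?_⟩
  have hnear := h.setIntegral_Ioo_sq_le hr.le c
  have hfar := h.setIntegral_compl_Ioo_sq_le (R := R) (Real.sqrt_pos.2 (by positivity)) hr c
  have hsum := integral_add_compl (measurableSet_Ioo (a := c - r) (b := c + r))
    (h.polyGrowth.pow 2).integrable (μ := ouMeasure)
  set m := ∫ y, u y ^ 2 ∂ouMeasure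
  set J := ∫ y, |y - c| * |u y| ∂ouMeasure
  have hm : 0 ≤ m := integral_nonneg fun y => sq_nonneg _
  have hJ : 0 ≤ J := integral_nonneg fun y => by positivity
  have hnear_eq : 2 * r * ((5 + 5 * M) * m) = m / 4 := by
    rw [hr_def]
    field_simp
    ring
  have hfar_eq : (4 + 16 * M) * m / R ^ 2 = m / 4 := by
    rw [hR]
    field_simp
    ring
  have hhalf : √m * √m ≤ √m * (2 * k / r * J) := by
    rw [Real.mul_self_sqrt hm]
    linarith [show √m * (2 * k / r * J) = 2 * (k * √m / r * J) by ring]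
  rcases (Real.sqrt_nonneg m).eq_or_lt with hzero | hpos
  · simpa [← hzero] using hJ
  · calc r / (2 * k) * √m ≤ r / (2 * k) * (2 * k / r * J) := by
          gcongr
          exact le_of_mul_le_mul_left hhalf hpos
      _ = J := by field_simp

/-- The change of sign is at the supremum of `{u < 0}`. -/
lemma exists_forall_mul_sub_nonneg_of_not_twoSignChangesOn {p q a b : ℝ}
    (hu : ¬ TwoSignChangesOn u (Icc p q)) (ha : a ∈ Icc p q) (hb : b ∈ Icc p q) (hab : a < b)
    (hua : u a < 0) (hub : 0 < u b) :
    ∃ c ∈ Icc p q, ∀ y ∈ Icc p q, 0 ≤ (y - c) * u y := by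
  set s : Set ℝ := {y | y ∈ Icc p q ∧ u y < 0}
  have hbdd : BddAbove s := ⟨q, fun y hy => hy.1.2⟩
  have has : a ∈ s := ⟨ha, hua⟩
  refine ⟨sSup s, ⟨ha.1.trans (le_csSup hbdd has), csSup_le ⟨a, has⟩ fun y hy => hy.1.2⟩,
    fun y hy => ?_⟩
  rcases lt_trichotomy y (sSup s) with hlt | heq | hgt
  · refine mul_nonneg_of_nonpos_of_nonpos (sub_nonpos.2 hlt.le) ?_
    by_contra! hpos
    obtain ⟨z, hz, hyz⟩ := exists_lt_of_lt_csSup ⟨a, has⟩ hlt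
    rcases lt_trichotomy a y with hay | rfl | hya
    · exact hu ⟨a, ha, y, hy, z, hz.1, hay, hyz, mul_neg_of_neg_of_pos hua hpos,
        mul_neg_of_pos_of_neg hpos hz.2⟩
    · exact hua.not_gt hpos
    · exact hu ⟨y, hy, a, ha, b, hb, hya, hab, mul_neg_of_pos_of_neg hpos hua,
        mul_neg_of_neg_of_pos hua hub⟩
  · simp [heq]
  · refine mul_nonneg (sub_nonneg.2 hgt.le) ?_
    by_contra! hneg
    exact (le_csSup hbdd ⟨hy, hneg⟩).not_gt hgt

lemma exists_abs_eq_one_forall_nonneg_of_not_twoSignChangesOn {p q : ℝ} (hpq : p ≤ q)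
    (hu : ¬ TwoSignChangesOn u (Icc p q)) :
    ∃ c ∈ Icc p q, ∃ s : ℝ, |s| = 1 ∧ ∀ y ∈ Icc p q, 0 ≤ s * ((y - c) * u y) := by
  by_cases hnonneg : ∀ y ∈ Icc p q, 0 ≤ u y
  · exact ⟨p, left_mem_Icc.2 hpq, 1, abs_one, fun y hy => by
      simpa using mul_nonneg (sub_nonneg.2 hy.1) (hnonneg y hy)⟩
  by_cases hnonpos : ∀ y ∈ Icc p q, u y ≤ 0
  · exact ⟨p, left_mem_Icc.2 hpq, -1, by simp, fun y hy => by
      simpa using mul_nonpos_of_nonneg_of_nonpos (sub_nonneg.2 hy.1) (hnonpos y hy)⟩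
  push Not at hnonneg hnonpos
  obtain ⟨a, ha, hua⟩ := hnonneg
  obtain ⟨b, hb, hub⟩ := hnonpos
  rcases lt_trichotomy a b with hab | rfl | hba
  · obtain ⟨c, hc, h⟩ := exists_forall_mul_sub_nonneg_of_not_twoSignChangesOn hu ha hb hab hua hub
    exact ⟨c, hc, 1, abs_one, by simpa using h⟩
  · exact absurd hua hub.not_gt
  · obtain ⟨c, hc, h⟩ := exists_forall_mul_sub_nonneg_of_not_twoSignChangesOn (u := -u)
      (by simpa [TwoSignChangesOn] using hu) hb ha hba (neg_neg_of_pos hub) (neg_pos.2 hua)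
    exact ⟨c, hc, -1, by simp, by simpa using h⟩

lemma abs_sub_mul_abs_le_of_abs_eq_one {K c s y w : ℝ} (hK : 0 < K) (hc : |c| ≤ K) (hs : |s| = 1)
    (hw : |y| ≤ K → 0 ≤ s * ((y - c) * w)) :
    |y - c| * |w| ≤ s * ((y - c) * w) + 4 / K * (y ^ 2 * |w|) := by
  have habs : |s * ((y - c) * w)| = |y - c| * |w| := by rw [abs_mul, hs, one_mul, abs_mul]
  rcases le_or_gt |y| K with hy | hy
  · rw [← habs, abs_of_nonneg (hw hy)]
    exact le_add_of_nonneg_right (by positivity)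
  · have hyc : |y - c| ≤ 2 * |y| := (abs_sub _ _).trans (by linarith)
    have hyK : |y| ≤ y ^ 2 / K := by
      rw [le_div_iff₀ hK, ← sq_abs, pow_two]
      gcongr
    have hfar : |y - c| * |w| ≤ 2 / K * (y ^ 2 * |w|) := calc
      |y - c| * |w| ≤ 2 * (y ^ 2 / K) * |w| := by gcongr; linarith
      _ = 2 / K * (y ^ 2 * |w|) := by ring
    have hsigned := neg_abs_le (s * ((y - c) * w))
    rw [habs] at hsigned
    linarith [show 4 / K * (y ^ 2 * |w|) = 2 * (2 / K * (y ^ 2 * |w|)) by ring]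

lemma integral_abs_sub_mul_abs_le_of_not_twoSignChangesOn {K : ℝ} (hK : 0 < K)
    (hu : PolyGrowth u) (hsign : ¬ TwoSignChangesOn u (Icc (-K) K)) :
    ∃ c : ℝ, ∫ y, |y - c| * |u y| ∂ouMeasure ≤
      |∫ y, y * u y ∂ouMeasure| + K * |∫ y, u y ∂ouMeasure| +
        4 / K * (√(∫ y, (y ^ 2) ^ 2 ∂ouMeasure) * √(∫ y, u y ^ 2 ∂ouMeasure)) := by
  obtain ⟨c, hc, s, hs, hnonneg⟩ :=
    exists_abs_eq_one_forall_nonneg_of_not_twoSignChangesOn (by linarith) hsign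
  have hcK : |c| ≤ K := abs_le.2 hc
  have hyu : PolyGrowth fun y => y * u y := by fun_prop
  have hsq : PolyGrowth fun y => y ^ 2 := by fun_prop
  refine ⟨c, ?_⟩
  calc ∫ y, |y - c| * |u y| ∂ouMeasure
      ≤ ∫ y, (s * ((y - c) * u y) + 4 / K * (y ^ 2 * |u y|)) ∂ouMeasure :=
        integral_mono (PolyGrowth.integrable (by fun_prop)) (PolyGrowth.integrable (by fun_prop))
          fun y => abs_sub_mul_abs_le_of_abs_eq_one hK hcK hs fun hy => hnonneg y (abs_le.1 hy)
    _ = s * (∫ y, y * u y ∂ouMeasure - c * ∫ y, u y ∂ouMeasure) +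
          4 / K * ∫ y, y ^ 2 * |u y| ∂ouMeasure := by
        simp only [sub_mul]
        rw [integral_add, integral_const_mul, integral_const_mul, integral_sub hyu.integrable,
          integral_const_mul]
        all_goals exact PolyGrowth.integrable (by fun_prop)
    _ ≤ _ := by
        gcongr
        · refine (le_abs_self _).trans ?_
          rw [abs_mul, hs, one_mul]
          refine (abs_sub _ _).trans ?_
          rw [abs_mul]
          gcongr
        · have hcauchy := integral_abs_mul_le_sqrt_mul_sqrt (hsq.memLp_two (μ := 0) (v := 2))
            hu.memLp_two
          simpa only [abs_mul, abs_sq] using hcauchy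

lemma HasFrequencyLE.exists_twoSignChangesOn (hM : 0 ≤ M) :
    ∃ K > 0, ∃ η > 0, ∀ {u ux : ℝ → ℝ}, HasFrequencyLE M u ux →
      0 < ∫ y, u y ^ 2 ∂ouMeasure →
      |∫ y, u y ∂ouMeasure| ≤ η * √(∫ y, u y ^ 2 ∂ouMeasure) →
      |∫ y, y * u y ∂ouMeasure| ≤ η * √(∫ y, u y ^ 2 ∂ouMeasure) →
      TwoSignChangesOn u (Icc (-K) K) := by
  obtain ⟨c₀, hc₀, hlower⟩ := exists_sqrt_integral_sq_le hM
  set Q := √(∫ y, (y ^ 2) ^ 2 ∂ouMeasure)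
  have hQ : 0 ≤ Q := Real.sqrt_nonneg _
  set K := 8 * (Q + 1) / c₀ with hK_def
  have hK : 0 < K := by positivity
  refine ⟨K, hK, c₀ / (4 * (1 + K)), by positivity, fun {u ux} h hpos hm₀ hm₁ => ?_⟩
  by_contra hsign
  obtain ⟨c, hupper⟩ :=
    integral_abs_sub_mul_abs_le_of_not_twoSignChangesOn hK h.polyGrowth hsign
  set S := √(∫ y, u y ^ 2 ∂ouMeasure)
  have hS : 0 < S := Real.sqrt_pos.2 hpos
  have hmoments : |∫ y, y * u y ∂ouMeasure| + K * |∫ y, u y ∂ouMeasure| ≤ c₀ / 4 * S := calc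
    _ ≤ c₀ / (4 * (1 + K)) * S + K * (c₀ / (4 * (1 + K)) * S) := by gcongr
    _ = c₀ / 4 * S := by field_simp
  have htail : 4 / K * (Q * S) ≤ c₀ / 2 * S := calc
    4 / K * (Q * S) = c₀ / 2 * S * (Q / (Q + 1)) := by rw [hK_def]; field_simp; ring
    _ ≤ c₀ / 2 * S * 1 := by
      gcongr
      exact (div_le_one (by positivity)).2 (by linarith)
    _ = c₀ / 2 * S := mul_one _
  nlinarith [hlower h c]

end TwoSignChanges

section PerturbedOU

open MeasureTheory ProbabilityTheory

lemma norm_le_of_norm_deriv_le_neg_deriv {E : Type*} [NormedAddCommGroup E] [NormedSpace ℝ E]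
    {g g' : ℝ → E} {b b' : ℝ → ℝ} {θ : ℝ} (hg : ∀ s ≥ θ, HasDerivAt g (g' s) s)
    (hb : ∀ s, HasDerivAt b (b' s) s) (hle : ∀ s ≥ θ, ‖g' s‖ ≤ -b' s)
    (hg_lim : Tendsto g atTop (𝓝 0)) (hb_lim : Tendsto b atTop (𝓝 0)) : ‖g θ‖ ≤ b θ := by
  have hsub : ∀ s ≥ θ, ‖g s - g θ‖ ≤ b θ - b s := fun s hs =>
    image_norm_le_of_norm_deriv_right_le_deriv_boundary (f' := g') (B' := fun s => -b' s)
      (fun r hr => ((hg r hr.1).continuousAt.sub continuousAt_const).continuousWithinAt)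
      (fun r hr => ((hg r hr.1).sub_const _).hasDerivWithinAt) (by simp)
      (fun r => (hb r).const_sub _) (fun r hr => hle r hr.1) ⟨hs, le_rfl⟩
  simpa using le_of_tendsto_of_tendsto (hg_lim.sub_const _).norm (hb_lim.const_sub _)
    ((eventually_ge_atTop θ).mono hsub)

lemma exists_ge_forall_ge_le_of_tendsto_zero {r : ℝ → ℝ} {a : ℝ} (hr : ContinuousOn r (Ici a))
    (hpos : 0 < r a) (hlim : Tendsto r atTop (𝓝 0)) : ∃ b ≥ a, ∀ s ≥ b, r s ≤ r b := by
  obtain ⟨b, hb, hmax⟩ := hr.exists_isMaxOn' isClosed_Ici self_mem_Ici (by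
    rw [cocompact_eq_atBot_atTop, inf_sup_right, eventually_sup]
    refine ⟨?_, (hlim.eventually_le_const hpos).filter_mono inf_le_left⟩
    rw [(disjoint_atBot_principal_Ici a).eq_bot]
    exact eventually_bot)
  exact ⟨b, hb, fun s hs => hmax (hb.trans hs)⟩

lemma hasDerivAt_of_sub_eq_integral_mul {α : Type*} [MeasurableSpace α] {μ : Measure α}
    {F : ℝ → ℝ} {u k : ℝ → α → ℝ} {u' b c : α → ℝ} {θ : ℝ}
    (hu : ∀ a, HasDerivAt (fun s => u s a) (u' a) θ)
    (hk : ∀ a, ContinuousAt (fun s => k s a) θ)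
    (hmeas : ∀ᶠ s in 𝓝 θ, AEStronglyMeasurable (fun a => (u s a - u θ a) * k s a) μ)
    (hub : ∀ᶠ s in 𝓝 θ, ∀ a, |u s a - u θ a| ≤ b a * |s - θ|)
    (hkc : ∀ᶠ s in 𝓝 θ, ∀ a, |k s a| ≤ c a) (hbc : Integrable (fun a => b a * c a) μ)
    (hF : ∀ᶠ s in 𝓝 θ, F s - F θ = ∫ a, (u s a - u θ a) * k s a ∂μ) :
    HasDerivAt F (∫ a, u' a * k θ a ∂μ) θ := by
  rw [hasDerivAt_iff_tendsto_slope]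
  have hlim : Tendsto (fun s => ∫ a, (s - θ)⁻¹ * ((u s a - u θ a) * k s a) ∂μ) (𝓝[≠] θ)
      (𝓝 (∫ a, u' a * k θ a ∂μ)) := by
    refine tendsto_integral_filter_of_dominated_convergence (fun a => b a * c a) ?_ ?_ hbc ?_
    · exact (hmeas.filter_mono nhdsWithin_le_nhds).mono fun s hs => hs.const_mul _
    · filter_upwards [hub.filter_mono nhdsWithin_le_nhds, hkc.filter_mono nhdsWithin_le_nhds,
        self_mem_nhdsWithin] with s hsb hsc hsθ
      refine ae_of_all _ fun a => ?_
      have hpos : 0 < |s - θ| := abs_pos.2 (sub_ne_zero.2 hsθ)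
      have hslope : |s - θ|⁻¹ * |u s a - u θ a| ≤ b a := by
        rw [← div_eq_inv_mul, div_le_iff₀ hpos]
        exact hsb a
      rw [Real.norm_eq_abs, abs_mul, abs_mul, abs_inv, ← mul_assoc]
      exact mul_le_mul hslope (hsc a) (abs_nonneg _) ((by positivity : (0 : ℝ) ≤ _).trans hslope)
    · refine ae_of_all _ fun a => ?_
      simp only [← mul_assoc, ← div_eq_inv_mul, ← slope_def_field (fun s => u s a)]
      exact (hasDerivAt_iff_tendsto_slope.1 (hu a)).mul
        ((hk a).tendsto.mono_left nhdsWithin_le_nhds)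
  refine hlim.congr' ((hF.filter_mono nhdsWithin_le_nhds).mono fun s hs => ?_)
  rw [integral_const_mul, ← hs, slope_def_field, div_eq_inv_mul]

/-- The Ornstein-Uhlenbeck operator `f ↦ f'' - (y / 2) f'`, applied to a function with first and
second derivatives `f'` and `f''`. -/
noncomputable def ouOperator (f' f'' : ℝ → ℝ) (y : ℝ) : ℝ := f'' y - y / 2 * f' y

@[fun_prop]
lemma PolyGrowth.ouOperator {f' f'' : ℝ → ℝ} (hf' : PolyGrowth f') (hf'' : PolyGrowth f'') :
    PolyGrowth (ouOperator f' f'') := by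
  unfold _root_.ouOperator
  fun_prop

lemma integral_ouOperator_mul {f' f'' g g' : ℝ → ℝ} (hderiv : ∀ y, HasDerivAt f' (f'' y) y)
    (hf' : PolyGrowth f') (hf'' : PolyGrowth f'') (hderiv_g : ∀ y, HasDerivAt g (g' y) y)
    (hg : PolyGrowth g) (hg' : PolyGrowth g') :
    ∫ y, ouOperator f' f'' y * g y ∂ouMeasure = -∫ y, f' y * g' y ∂ouMeasure := by
  have hstein : ∫ y, y * (f' y * g y) ∂ouMeasure =
      2 * ∫ y, (f'' y * g y + f' y * g' y) ∂ouMeasure :=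
    integral_mul_ouMeasure (fun y => (hderiv y).fun_mul (hderiv_g y)) (by fun_prop) (by fun_prop)
  have hexpand : ∫ y, ouOperator f' f'' y * g y ∂ouMeasure =
      ∫ y, (f'' y * g y - y * (f' y * g y) / 2) ∂ouMeasure := by
    congr with y
    rw [ouOperator]
    ring
  rw [integral_add] at hstein
  · rw [hexpand, integral_sub, integral_div, hstein]
    · ring
    all_goals exact PolyGrowth.integrable (by fun_prop)
  all_goals exact PolyGrowth.integrable (by fun_prop)

lemma integral_sub_mul_ouOperator_add {f f' f'' g g' g'' : ℝ → ℝ} (hf : PolyGrowth f)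
    (hf' : PolyGrowth f') (hf'' : PolyGrowth f'') (hg : PolyGrowth g) (hg' : PolyGrowth g')
    (hg'' : PolyGrowth g'') (hderiv_f : ∀ y, HasDerivAt f (f' y) y)
    (hderiv_f' : ∀ y, HasDerivAt f' (f'' y) y) (hderiv_g : ∀ y, HasDerivAt g (g' y) y)
    (hderiv_g' : ∀ y, HasDerivAt g' (g'' y) y) :
    ∫ y, (f y - g y) * (ouOperator f' f'' y + ouOperator g' g'' y) ∂ouMeasure =
      ∫ y, g' y ^ 2 ∂ouMeasure - ∫ y, f' y ^ 2 ∂ouMeasure := by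
  have hderiv : ∀ y, HasDerivAt (fun y => f y - g y) (f' y - g' y) y := fun y =>
    (hderiv_f y).fun_sub (hderiv_g y)
  have h₁ := integral_ouOperator_mul hderiv_f' hf' hf'' hderiv (by fun_prop) (by fun_prop)
  have h₂ := integral_ouOperator_mul hderiv_g' hg' hg'' hderiv (by fun_prop) (by fun_prop)
  calc ∫ y, (f y - g y) * (ouOperator f' f'' y + ouOperator g' g'' y) ∂ouMeasure
      = -∫ y, f' y * (f' y - g' y) ∂ouMeasure - ∫ y, g' y * (f' y - g' y) ∂ouMeasure := by
        rw [← h₁, sub_eq_add_neg, ← h₂, ← integral_add]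
        · congr with y
          ring
        all_goals exact PolyGrowth.integrable (by fun_prop)
    _ = ∫ y, g' y ^ 2 ∂ouMeasure - ∫ y, f' y ^ 2 ∂ouMeasure := by
        rw [← integral_neg, ← integral_sub, ← integral_sub]
        · congr with y
          ring
        all_goals first
          | exact PolyGrowth.integrable (by fun_prop)
          | exact (PolyGrowth.integrable (by fun_prop)).neg

/-- A nonzero solution `u` of `u_θ = u_yy - (y / 2) u_y + G` for `θ > 0`, with bounded `u`, `u_y`,
`u_yy`, where the forcing `G` is small of order `exp (-θ / 2)` relative to `u` and `u_y`, and `u`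
itself decays like `exp (-θ)`. -/
structure PerturbedOU (B C : ℝ) (u ux uxx G : ℝ → ℝ → ℝ) : Prop where
  hasDerivAt_time : ∀ θ > 0, ∀ y,
    HasDerivAt (fun s => u s y) (ouOperator (ux θ) (uxx θ) y + G θ y) θ
  hasDerivAt_space : ∀ θ > 0, ∀ y, HasDerivAt (u θ) (ux θ y) y
  hasDerivAt_space₂ : ∀ θ > 0, ∀ y, HasDerivAt (ux θ) (uxx θ y) y
  continuous_deriv : Continuous (Function.uncurry ux)
  continuous_deriv₂ : Continuous (Function.uncurry uxx)
  continuous_forcing : ∀ θ > 0, Continuous (G θ)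
  abs_le : ∀ θ > 0, ∀ y, |u θ y| ≤ B
  abs_deriv_le : ∀ θ > 0, ∀ y, |ux θ y| ≤ B
  abs_deriv₂_le : ∀ θ > 0, ∀ y, |uxx θ y| ≤ B
  abs_forcing_le : ∀ θ > 0, ∀ y, |G θ y| ≤ C * Real.exp (-θ / 2) * (|u θ y| + |ux θ y|)
  decay : ∀ θ > 0, ∀ y, |u θ y| ≤ B * Real.exp (-θ) * (1 + y ^ 2)
  ne_zero : ∀ θ > 0, u θ ≠ 0

namespace PerturbedOU

variable {u ux uxx G : ℝ → ℝ → ℝ} {B C θ : ℝ}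

lemma constant_nonneg (S : PerturbedOU B C u ux uxx G) : 0 ≤ C := by
  obtain ⟨y, hy⟩ := Function.ne_iff.1 (S.ne_zero 1 one_pos)
  have hpos : 0 < Real.exp (-1 / 2) * (|u 1 y| + |ux 1 y|) :=
    mul_pos (Real.exp_pos _) (add_pos_of_pos_of_nonneg (abs_pos.2 hy) (abs_nonneg _))
  refine nonneg_of_mul_nonneg_left ?_ hpos
  rw [← mul_assoc]
  exact (abs_nonneg _).trans (S.abs_forcing_le 1 one_pos y)

lemma abs_forcing_le_const (S : PerturbedOU B C u ux uxx G) (hθ : 0 < θ) (y : ℝ) :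
    |G θ y| ≤ C * (B + B) := by
  have hC := S.constant_nonneg
  calc |G θ y| ≤ C * Real.exp (-θ / 2) * (|u θ y| + |ux θ y|) := S.abs_forcing_le θ hθ y
    _ ≤ C * 1 * (B + B) := by
      gcongr
      exacts [Real.exp_le_one_iff.2 (by linarith), S.abs_le θ hθ y, S.abs_deriv_le θ hθ y]
    _ = C * (B + B) := by rw [mul_one]

lemma polyGrowth (S : PerturbedOU B C u ux uxx G) (hθ : 0 < θ) :
    PolyGrowth (u θ) ∧ PolyGrowth (ux θ) ∧ PolyGrowth (uxx θ) ∧ PolyGrowth (G θ) :=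
  ⟨⟨continuous_iff_continuousAt.2 fun y => (S.hasDerivAt_space θ hθ y).continuousAt,
      B, 0, by simpa using S.abs_le θ hθ⟩,
    ⟨S.continuous_deriv.uncurry_left θ, B, 0, by simpa using S.abs_deriv_le θ hθ⟩,
    ⟨S.continuous_deriv₂.uncurry_left θ, B, 0, by simpa using S.abs_deriv₂_le θ hθ⟩,
    ⟨S.continuous_forcing θ hθ, C * (B + B), 0, by simpa using S.abs_forcing_le_const hθ⟩⟩

end PerturbedOU

end PerturbedOU

section Frequency

open MeasureTheory ProbabilityTheory

/-- With `w = l + G / 2` the left-hand side is `-2 ∫ w² ∫ u² + 2 (∫ w u)²`, up to terms controlled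
by the right-hand side: this is Poon's form of the almost monotonicity of the frequency. -/
lemma frequency_deriv_numerator_le {u l G : ℝ → ℝ} {D : ℝ} (hu : PolyGrowth u) (hl : PolyGrowth l)
    (hG : PolyGrowth G) (hD : ∫ y, l y * u y ∂ouMeasure = -D) :
    (-2 * ∫ y, (l y + G y) * l y ∂ouMeasure) * ∫ y, u y ^ 2 ∂ouMeasure -
        D * (2 * ∫ y, (l y + G y) * u y ∂ouMeasure) ≤
      (∫ y, u y ^ 2 ∂ouMeasure) * (∫ y, G y ^ 2 ∂ouMeasure) / 2 := by
  have hcauchy := sq_integral_mul_le (μ := ouMeasure)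
    (PolyGrowth.memLp_two (f := fun y => l y + G y / 2) (by fun_prop)) hu.memLp_two
  have hwu : ∫ y, (l y + G y / 2) * u y ∂ouMeasure = -D + (∫ y, G y * u y ∂ouMeasure) / 2 := by
    simp only [add_mul, div_mul_eq_mul_div]
    rw [integral_add, hD, integral_div]
    all_goals exact PolyGrowth.integrable (by fun_prop)
  have hlGu : ∫ y, (l y + G y) * u y ∂ouMeasure = -D + ∫ y, G y * u y ∂ouMeasure := by
    simp only [add_mul]
    rw [integral_add, hD]
    all_goals exact PolyGrowth.integrable (by fun_prop)
  have hww : ∫ y, (l y + G y / 2) ^ 2 ∂ouMeasure =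
      ∫ y, (l y + G y) * l y ∂ouMeasure + (∫ y, G y ^ 2 ∂ouMeasure) / 4 := by
    rw [← integral_div, ← integral_add]
    · congr with y
      ring
    all_goals exact PolyGrowth.integrable (by fun_prop)
  rw [hwu, hww] at hcauchy
  rw [hlGu]
  linarith [sq_nonneg (∫ y, G y * u y ∂ouMeasure)]

namespace PerturbedOU

variable {u ux uxx G : ℝ → ℝ → ℝ} {B C θ : ℝ}

lemma integral_sq_pos (S : PerturbedOU B C u ux uxx G) (hθ : 0 < θ) :
    0 < ∫ y, u θ y ^ 2 ∂ouMeasure := by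
  have hu := (S.polyGrowth hθ).1
  have : ouMeasure.IsOpenPosMeasure :=
    (gaussianReal_absolutelyContinuous' 0 two_ne_zero).isOpenPosMeasure
  obtain ⟨y, hy⟩ := Function.ne_iff.1 (S.ne_zero θ hθ)
  exact integral_pos_of_integrable_nonneg_nonzero (hu.pow 2).1 (hu.pow 2).integrable
    (fun y => sq_nonneg _) (pow_ne_zero 2 hy)

lemma abs_ouOperator_le (S : PerturbedOU B C u ux uxx G) (hθ : 0 < θ) (y : ℝ) :
    |ouOperator (ux θ) (uxx θ) y| ≤ B + |y / 2| * B := by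
  refine (abs_sub _ _).trans (add_le_add (S.abs_deriv₂_le θ hθ y) ?_)
  rw [abs_mul]
  gcongr
  exact S.abs_deriv_le θ hθ y

lemma abs_sub_le (S : PerturbedOU B C u ux uxx G) {s : ℝ} (hθ : 0 < θ) (hs : 0 < s) (y : ℝ) :
    |u s y - u θ y| ≤ (B + |y / 2| * B + C * (B + B)) * |s - θ| :=
  (convex_Ioi (0 : ℝ)).norm_image_sub_le_of_norm_hasDerivWithin_le
    (fun r hr => (S.hasDerivAt_time r hr y).hasDerivWithinAt)
    (fun _ hr => (abs_add_le _ _).trans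
      (add_le_add (S.abs_ouOperator_le hr y) (S.abs_forcing_le_const hr y))) hθ hs

lemma hasDerivAt_of_sub_eq (S : PerturbedOU B C u ux uxx G) (hθ : 0 < θ) {F : ℝ → ℝ}
    {k : ℝ → ℝ → ℝ} {c : ℝ → ℝ} (hk : ∀ s > 0, Continuous (k s))
    (hkθ : ∀ y, ContinuousAt (fun s => k s y) θ) (hc : PolyGrowth c)
    (hkc : ∀ s > 0, ∀ y, |k s y| ≤ c y)
    (hF : ∀ s > 0, F s - F θ = ∫ y, (u s y - u θ y) * k s y ∂ouMeasure) :
    HasDerivAt F (∫ y, (ouOperator (ux θ) (uxx θ) y + G θ y) * k θ y ∂ouMeasure) θ := by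
  have hpos : ∀ᶠ s in 𝓝 θ, 0 < s := lt_mem_nhds hθ
  refine hasDerivAt_of_sub_eq_integral_mul (S.hasDerivAt_time θ hθ) hkθ ?_
    (hpos.mono fun s hs => S.abs_sub_le hθ hs) (hpos.mono hkc) ?_ (hpos.mono hF)
  · exact hpos.mono fun s hs => (((S.polyGrowth hs).1.1.sub (S.polyGrowth hθ).1.1).mul
      (hk s hs)).aestronglyMeasurable
  · exact PolyGrowth.integrable (by fun_prop)

lemma hasDerivAt_integral_sq (S : PerturbedOU B C u ux uxx G) (hθ : 0 < θ) :
    HasDerivAt (fun s => ∫ y, u s y ^ 2 ∂ouMeasure)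
      (2 * ∫ y, (ouOperator (ux θ) (uxx θ) y + G θ y) * u θ y ∂ouMeasure) θ := by
  have hu := (S.polyGrowth hθ).1
  have h := S.hasDerivAt_of_sub_eq (F := fun s => ∫ y, u s y ^ 2 ∂ouMeasure)
    (k := fun s y => u s y + u θ y) (c := fun _ => B + B) hθ
    (fun s hs => (S.polyGrowth hs).1.1.add hu.1)
    (fun y => (S.hasDerivAt_time θ hθ y).continuousAt.add continuousAt_const) (by fun_prop)
    (fun s hs y => (abs_add_le _ _).trans (add_le_add (S.abs_le s hs y) (S.abs_le θ hθ y)))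
    (fun s hs => by
      rw [← integral_sub ((S.polyGrowth hs).1.pow 2).integrable (hu.pow 2).integrable]
      congr with y
      ring)
  refine h.congr_deriv ?_
  rw [← integral_const_mul]
  congr with y
  ring

/-- Integrating by parts first, `ux s² - ux θ²` pairs `u s - u θ` with `ouOperator`, so no mixed
derivative of `u` is needed. -/
lemma hasDerivAt_integral_deriv_sq (S : PerturbedOU B C u ux uxx G) (hθ : 0 < θ) :
    HasDerivAt (fun s => ∫ y, ux s y ^ 2 ∂ouMeasure)
      (-2 * ∫ y, (ouOperator (ux θ) (uxx θ) y + G θ y) * ouOperator (ux θ) (uxx θ) y ∂ouMeasure)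
      θ := by
  obtain ⟨hu, hux, huxx, -⟩ := S.polyGrowth hθ
  have hcont : ∀ y, Continuous fun s => ouOperator (ux s) (uxx s) y := fun y =>
    (S.continuous_deriv₂.uncurry_right y).sub
      (continuous_const.mul (S.continuous_deriv.uncurry_right y))
  have h := S.hasDerivAt_of_sub_eq (F := fun s => ∫ y, ux s y ^ 2 ∂ouMeasure)
    (k := fun s y => -(ouOperator (ux s) (uxx s) y + ouOperator (ux θ) (uxx θ) y))
    (c := fun y => (B + |y / 2| * B) + (B + |y / 2| * B)) hθ
    (fun s hs => by
      obtain ⟨-, huxs, huxxs, -⟩ := S.polyGrowth hs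
      exact ((huxs.ouOperator huxxs).1.add (hux.ouOperator huxx).1).neg)
    (fun y => ((hcont y).add continuous_const).neg.continuousAt) (by fun_prop)
    (fun s hs y => (abs_neg _).trans_le ((abs_add_le _ _).trans
      (add_le_add (S.abs_ouOperator_le hs y) (S.abs_ouOperator_le hθ y))))
    (fun s hs => by
      obtain ⟨hus, huxs, huxxs, -⟩ := S.polyGrowth hs
      simp only [mul_neg]
      rw [integral_neg, integral_sub_mul_ouOperator_add hus huxs huxxs hu hux huxx
        (S.hasDerivAt_space s hs) (S.hasDerivAt_space₂ s hs) (S.hasDerivAt_space θ hθ)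
        (S.hasDerivAt_space₂ θ hθ), neg_sub])
  refine h.congr_deriv ?_
  rw [← integral_const_mul]
  congr with y
  ring

lemma hasDerivAt_integral_mul (S : PerturbedOU B C u ux uxx G) (hθ : 0 < θ) {g g' : ℝ → ℝ}
    (hderiv : ∀ y, HasDerivAt g (g' y) y) (hg : PolyGrowth g) (hg' : PolyGrowth g') :
    HasDerivAt (fun s => ∫ y, g y * u s y ∂ouMeasure)
      (∫ y, g y * G θ y ∂ouMeasure - ∫ y, g' y * ux θ y ∂ouMeasure) θ := by
  obtain ⟨hu, hux, huxx, hG⟩ := S.polyGrowth hθ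
  have h := S.hasDerivAt_of_sub_eq (F := fun s => ∫ y, g y * u s y ∂ouMeasure)
    (k := fun _ => g) (c := fun y => |g y|) hθ (fun _ _ => hg.1) (fun y => continuousAt_const)
    (by fun_prop) (fun _ _ _ => le_rfl)
    (fun s hs => by
      rw [← integral_sub (hg.mul (S.polyGrowth hs).1).integrable (hg.mul hu).integrable]
      congr with y
      ring)
  refine h.congr_deriv ?_
  simp only [add_mul]
  rw [integral_add, integral_ouOperator_mul (S.hasDerivAt_space₂ θ hθ) hux huxx hderiv hg hg']
  · simp only [mul_comm]
    ring
  all_goals exact PolyGrowth.integrable (by fun_prop)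

lemma integral_forcing_sq_le (S : PerturbedOU B C u ux uxx G) (hθ : 0 < θ) :
    ∫ y, G θ y ^ 2 ∂ouMeasure ≤ 2 * C ^ 2 * Real.exp (-θ) *
      (∫ y, u θ y ^ 2 ∂ouMeasure + ∫ y, ux θ y ^ 2 ∂ouMeasure) := by
  obtain ⟨hu, hux, -, hG⟩ := S.polyGrowth hθ
  rw [← integral_add (hu.pow 2).integrable (hux.pow 2).integrable, ← integral_const_mul]
  refine integral_mono (hG.pow 2).integrable (PolyGrowth.integrable (by fun_prop)) fun y => ?_
  calc G θ y ^ 2 ≤ (C * Real.exp (-θ / 2) * (|u θ y| + |ux θ y|)) ^ 2 :=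
        sq_le_sq' ((neg_le_neg (S.abs_forcing_le θ hθ y)).trans (neg_abs_le _))
          (le_of_abs_le (S.abs_forcing_le θ hθ y))
    _ = C ^ 2 * Real.exp (-θ) * (|u θ y| + |ux θ y|) ^ 2 := by
        rw [mul_pow, mul_pow, ← Real.exp_nat_mul]
        congr 4
        ring
    _ ≤ C ^ 2 * Real.exp (-θ) * (2 * (|u θ y| ^ 2 + |ux θ y| ^ 2)) := by
        gcongr
        exact add_sq_le
    _ = 2 * C ^ 2 * Real.exp (-θ) * (u θ y ^ 2 + ux θ y ^ 2) := by
        rw [sq_abs, sq_abs]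
        ring

lemma antitoneOn_frequency_mul_exp (S : PerturbedOU B C u ux uxx G) :
    AntitoneOn (fun θ => (1 + (∫ y, ux θ y ^ 2 ∂ouMeasure) / ∫ y, u θ y ^ 2 ∂ouMeasure) *
      Real.exp (C ^ 2 * Real.exp (-θ))) (Ioi 0) := by
  set H := fun θ => ∫ y, u θ y ^ 2 ∂ouMeasure
  set D := fun θ => ∫ y, ux θ y ^ 2 ∂ouMeasure
  have hexp : ∀ θ, HasDerivAt (fun θ => Real.exp (C ^ 2 * Real.exp (-θ)))
      (Real.exp (C ^ 2 * Real.exp (-θ)) * -(C ^ 2 * Real.exp (-θ))) θ := fun θ =>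
    (((hasDerivAt_neg θ).exp).const_mul (C ^ 2)).exp.congr_deriv (by ring)
  have hderiv := fun (θ : ℝ) (hθ : 0 < θ) =>
    (((S.hasDerivAt_integral_deriv_sq hθ).fun_div (S.hasDerivAt_integral_sq hθ)
      (S.integral_sq_pos hθ).ne').const_add 1).fun_mul (hexp θ)
  refine antitoneOn_of_hasDerivWithinAt_nonpos (convex_Ioi 0)
    (fun θ hθ => (hderiv θ hθ).continuousAt.continuousWithinAt)
    (fun θ hθ => (hderiv θ (interior_subset hθ)).hasDerivWithinAt) fun θ hθ => ?_
  replace hθ : 0 < θ := interior_subset hθ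
  obtain ⟨hu, hux, huxx, hG⟩ := S.polyGrowth hθ
  have hH : 0 < H θ := S.integral_sq_pos hθ
  have hnum := frequency_deriv_numerator_le hu (hux.ouOperator huxx) hG (D := D θ) (by
    simpa only [← pow_two] using integral_ouOperator_mul (S.hasDerivAt_space₂ θ hθ) hux huxx
      (S.hasDerivAt_space θ hθ) hu hux)
  set N := (-2 * ∫ y, (ouOperator (ux θ) (uxx θ) y + G θ y) * ouOperator (ux θ) (uxx θ) y
    ∂ouMeasure) * H θ - D θ * (2 * ∫ y, (ouOperator (ux θ) (uxx θ) y + G θ y) * u θ y ∂ouMeasure)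
  have hquot : N / H θ ^ 2 ≤ (1 + D θ / H θ) * (C ^ 2 * Real.exp (-θ)) := by
    rw [div_le_iff₀ (by positivity)]
    calc N ≤ H θ * (2 * C ^ 2 * Real.exp (-θ) * (H θ + D θ)) / 2 :=
          hnum.trans (by gcongr; exact S.integral_forcing_sq_le hθ)
      _ = (1 + D θ / H θ) * (C ^ 2 * Real.exp (-θ)) * H θ ^ 2 := by field_simp
  calc _ = (N / H θ ^ 2 - (1 + D θ / H θ) * (C ^ 2 * Real.exp (-θ))) *
        Real.exp (C ^ 2 * Real.exp (-θ)) := by ring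
    _ ≤ 0 := mul_nonpos_of_nonpos_of_nonneg (sub_nonpos.2 hquot) (Real.exp_nonneg _)

lemma exists_hasFrequencyLE (S : PerturbedOU B C u ux uxx G) :
    ∃ M, 0 ≤ M ∧ ∀ θ ≥ 1, HasFrequencyLE M (u θ) (ux θ) := by
  have hfreq : ∀ θ, 0 ≤ (∫ y, ux θ y ^ 2 ∂ouMeasure) / ∫ y, u θ y ^ 2 ∂ouMeasure := fun θ =>
    div_nonneg (integral_nonneg fun _ => sq_nonneg _) (integral_nonneg fun _ => sq_nonneg _)
  refine ⟨(1 + (∫ y, ux 1 y ^ 2 ∂ouMeasure) / ∫ y, u 1 y ^ 2 ∂ouMeasure) *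
      Real.exp (C ^ 2 * Real.exp (-1)),
    mul_nonneg (add_nonneg zero_le_one (hfreq 1)) (Real.exp_nonneg _), fun θ hθ => ?_⟩
  have hθ₀ : 0 < θ := one_pos.trans_le hθ
  obtain ⟨hu, hux, -⟩ := S.polyGrowth hθ₀
  refine ⟨S.hasDerivAt_space θ hθ₀, hu, hux, (div_le_iff₀ (S.integral_sq_pos hθ₀)).1 ?_⟩
  refine le_trans ?_ (S.antitoneOn_frequency_mul_exp (mem_Ioi.2 one_pos) (mem_Ioi.2 hθ₀) hθ)
  calc _ ≤ 1 + (∫ y, ux θ y ^ 2 ∂ouMeasure) / ∫ y, u θ y ^ 2 ∂ouMeasure := by linarith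
    _ ≤ _ := le_mul_of_one_le_right (add_nonneg zero_le_one (hfreq θ))
      (Real.one_le_exp (by positivity))

end PerturbedOU

end Frequency

section Moments

open MeasureTheory ProbabilityTheory

lemma norm_le_of_norm_deriv_le_mul_exp {E : Type*} [NormedAddCommGroup E] [NormedSpace ℝ E]
    {g g' : ℝ → E} {b c θ : ℝ} (hb : 0 < b) (hg : ∀ s ≥ θ, HasDerivAt g (g' s) s)
    (hle : ∀ s ≥ θ, ‖g' s‖ ≤ c * Real.exp (-(b * s))) (hlim : Tendsto g atTop (𝓝 0)) :
    ‖g θ‖ ≤ c / b * Real.exp (-(b * θ)) := by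
  refine norm_le_of_norm_deriv_le_neg_deriv (b := fun s => c / b * Real.exp (-(b * s)))
    (b' := fun s => -(c * Real.exp (-(b * s)))) hg (fun s => ?_)
    (by simpa only [neg_neg] using hle) hlim ?_
  · refine (((hasDerivAt_id' s).const_mul b).fun_neg.exp.const_mul _).congr_deriv ?_
    field_simp
  · simpa using (Real.tendsto_exp_neg_atTop_nhds_zero.comp
      (tendsto_id.const_mul_atTop hb)).const_mul (c / b)

namespace PerturbedOU

variable {u ux uxx G : ℝ → ℝ → ℝ} {B C M θ : ℝ}

lemma abs_integral_mul_forcing_le (S : PerturbedOU B C u ux uxx G) (hθ : 0 < θ) (hM : 0 ≤ M)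
    (hfreq : HasFrequencyLE M (u θ) (ux θ)) {g : ℝ → ℝ} (hg : PolyGrowth g) :
    |∫ y, g y * G θ y ∂ouMeasure| ≤ √(∫ y, g y ^ 2 ∂ouMeasure) * (C * √(2 * (1 + M))) *
      (Real.exp (-θ / 2) * √(∫ y, u θ y ^ 2 ∂ouMeasure)) := by
  have hC := S.constant_nonneg
  have hG : √(∫ y, G θ y ^ 2 ∂ouMeasure) ≤
      C * √(2 * (1 + M)) * (Real.exp (-θ / 2) * √(∫ y, u θ y ^ 2 ∂ouMeasure)) := by
    refine Real.sqrt_le_iff.2 ⟨by positivity, (S.integral_forcing_sq_le hθ).trans ?_⟩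
    have hu : 0 ≤ ∫ y, u θ y ^ 2 ∂ouMeasure := integral_nonneg fun _ => sq_nonneg _
    rw [mul_pow, mul_pow, mul_pow, Real.sq_sqrt (by positivity), Real.sq_sqrt hu,
      ← Real.exp_nat_mul, show ((2 : ℕ) : ℝ) * (-θ / 2) = -θ by push_cast; ring]
    calc _ ≤ 2 * C ^ 2 * Real.exp (-θ) *
          (∫ y, u θ y ^ 2 ∂ouMeasure + M * ∫ y, u θ y ^ 2 ∂ouMeasure) := by
          gcongr
          exact hfreq.integral_deriv_sq_le
      _ = _ := by ring
  calc |∫ y, g y * G θ y ∂ouMeasure| ≤ ∫ y, |g y * G θ y| ∂ouMeasure := abs_integral_le_integral_abs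
    _ ≤ √(∫ y, g y ^ 2 ∂ouMeasure) * √(∫ y, G θ y ^ 2 ∂ouMeasure) :=
        integral_abs_mul_le_sqrt_mul_sqrt hg.memLp_two (S.polyGrowth hθ).2.2.2.memLp_two
    _ ≤ _ := by
        rw [mul_assoc]
        gcongr

lemma sqrt_integral_sq_le (S : PerturbedOU B C u ux uxx G) (hθ : 0 < θ) :
    √(∫ y, u θ y ^ 2 ∂ouMeasure) ≤
      √(∫ y, (B * (1 + y ^ 2)) ^ 2 ∂ouMeasure) * Real.exp (-θ) := by
  refine Real.sqrt_le_iff.2 ⟨by positivity, ?_⟩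
  rw [mul_pow, Real.sq_sqrt (integral_nonneg fun _ => sq_nonneg _), ← integral_mul_const]
  have hB : PolyGrowth fun y => B * (1 + y ^ 2) := by fun_prop
  refine integral_mono ((S.polyGrowth hθ).1.pow 2).integrable
    ((hB.pow 2).mul (.const _)).integrable fun y => ?_
  rw [← mul_pow, mul_right_comm]
  exact sq_le_sq' ((neg_le_neg (S.decay θ hθ y)).trans (neg_abs_le _))
    (le_of_abs_le (S.decay θ hθ y))

/-- `∫ u²` decays like `exp (-2θ)`, so `exp θ * ∫ u²` tends to `0`; the times found here are those
after which it stays below its present value. -/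
lemma frequently_forall_ge_sqrt_integral_sq_le (S : PerturbedOU B C u ux uxx G) :
    ∃ᶠ θ in atTop, ∀ s ≥ θ, √(∫ y, u s y ^ 2 ∂ouMeasure) ≤
      Real.exp ((θ - s) / 2) * √(∫ y, u θ y ^ 2 ∂ouMeasure) := by
  set h := fun s => √(∫ y, u s y ^ 2 ∂ouMeasure)
  have hlim : Tendsto (fun s => Real.exp (s / 2) * h s) atTop (𝓝 0) := by
    have hexp : Tendsto (fun s : ℝ => √(∫ y, (B * (1 + y ^ 2)) ^ 2 ∂ouMeasure) *
        Real.exp (-(s / 2))) atTop (𝓝 0) := by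
      simpa using (Real.tendsto_exp_neg_atTop_nhds_zero.comp
        (tendsto_id.atTop_div_const two_pos)).const_mul _
    refine squeeze_zero' (.of_forall fun s => by positivity)
      ((eventually_gt_atTop 0).mono fun s hs => ?_) hexp
    calc Real.exp (s / 2) * h s ≤ Real.exp (s / 2) *
          (√(∫ y, (B * (1 + y ^ 2)) ^ 2 ∂ouMeasure) * Real.exp (-s)) := by
          gcongr
          exact S.sqrt_integral_sq_le hs
      _ = _ := by
          rw [mul_left_comm, ← Real.exp_add]
          congr 2
          ring
  refine frequently_atTop.2 fun a => ?_
  have ha : 0 < max a 1 := lt_max_of_lt_right one_pos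
  obtain ⟨θ, hθ, hmax⟩ := exists_ge_forall_ge_le_of_tendsto_zero (a := max a 1)
    (fun s hs => ((by fun_prop : ContinuousAt (fun s => Real.exp (s / 2)) s).mul
      (S.hasDerivAt_integral_sq (ha.trans_le hs)).continuousAt.sqrt).continuousWithinAt)
    (mul_pos (Real.exp_pos _) (Real.sqrt_pos.2 (S.integral_sq_pos ha))) hlim
  refine ⟨θ, (le_max_left _ _).trans hθ, fun s hs => ?_⟩
  calc h s = Real.exp (-(s / 2)) * (Real.exp (s / 2) * h s) := by
        rw [← mul_assoc, ← Real.exp_add, neg_add_cancel, Real.exp_zero, one_mul]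
    _ ≤ Real.exp (-(s / 2)) * (Real.exp (θ / 2) * h θ) := by
        refine mul_le_mul_of_nonneg_left ?_ (Real.exp_nonneg _)
        simpa only [Pi.mul_apply] using hmax s hs
    _ = _ := by
        rw [← mul_assoc, ← Real.exp_add]
        congr 2
        ring

lemma tendsto_exp_mul_integral_mul (S : PerturbedOU B C u ux uxx G) {g : ℝ → ℝ} {a : ℝ}
    (hg : PolyGrowth g) (ha : a < 1) :
    Tendsto (fun s => Real.exp (a * s) * ∫ y, g y * u s y ∂ouMeasure) atTop (𝓝 0) := by
  set A := √(∫ y, g y ^ 2 ∂ouMeasure) * √(∫ y, (B * (1 + y ^ 2)) ^ 2 ∂ouMeasure)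
  have hexp : Tendsto (fun s : ℝ => A * Real.exp (-((1 - a) * s))) atTop (𝓝 0) := by
    simpa using (Real.tendsto_exp_neg_atTop_nhds_zero.comp
      (tendsto_id.const_mul_atTop (sub_pos.2 ha))).const_mul A
  refine squeeze_zero_norm' ((eventually_gt_atTop 0).mono fun s hs => ?_) hexp
  rw [norm_mul, Real.norm_of_nonneg (Real.exp_nonneg _), Real.norm_eq_abs]
  calc Real.exp (a * s) * |∫ y, g y * u s y ∂ouMeasure|
      ≤ Real.exp (a * s) * (√(∫ y, g y ^ 2 ∂ouMeasure) * √(∫ y, u s y ^ 2 ∂ouMeasure)) := by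
        gcongr
        exact abs_integral_le_integral_abs.trans
          (integral_abs_mul_le_sqrt_mul_sqrt hg.memLp_two (S.polyGrowth hs).1.memLp_two)
    _ ≤ Real.exp (a * s) * (√(∫ y, g y ^ 2 ∂ouMeasure) *
          (√(∫ y, (B * (1 + y ^ 2)) ^ 2 ∂ouMeasure) * Real.exp (-s))) := by
        gcongr
        exact S.sqrt_integral_sq_le hs
    _ = A * (Real.exp (a * s) * Real.exp (-s)) := by ring
    _ = A * Real.exp (-((1 - a) * s)) := by
        rw [← Real.exp_add]
        congr 2
        ring

/-- Up to the forcing, the moment `∫ g u` against an eigenfunction `g` of eigenvalue `a < 1` is a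
multiple of `exp (-a θ)`, which decays too slowly for `∫ u² = O(exp (-2θ))`. -/
lemma abs_integral_mul_le (S : PerturbedOU B C u ux uxx G) (hθ : 0 < θ) (hM : 0 ≤ M)
    (hfreq : ∀ s ≥ θ, HasFrequencyLE M (u s) (ux s))
    (hgood : ∀ s ≥ θ, √(∫ y, u s y ^ 2 ∂ouMeasure) ≤
      Real.exp ((θ - s) / 2) * √(∫ y, u θ y ^ 2 ∂ouMeasure))
    {g g' : ℝ → ℝ} {a : ℝ} (hderiv : ∀ y, HasDerivAt g (g' y) y) (hg : PolyGrowth g)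
    (hg' : PolyGrowth g') (ha : a < 1)
    (heigen : ∀ s ≥ θ, ∫ y, g' y * ux s y ∂ouMeasure = a * ∫ y, g y * u s y ∂ouMeasure) :
    |∫ y, g y * u θ y ∂ouMeasure| ≤ √(∫ y, g y ^ 2 ∂ouMeasure) * (C * √(2 * (1 + M))) / (1 - a) *
      Real.exp (-θ / 2) * √(∫ y, u θ y ^ 2 ∂ouMeasure) := by
  set h := fun s => √(∫ y, u s y ^ 2 ∂ouMeasure)
  set A := √(∫ y, g y ^ 2 ∂ouMeasure) * (C * √(2 * (1 + M)))
  have hA : 0 ≤ A := mul_nonneg (Real.sqrt_nonneg _)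
    (mul_nonneg S.constant_nonneg (Real.sqrt_nonneg _))
  have hmoment : ∀ s ≥ θ, HasDerivAt (fun s => Real.exp (a * s) * ∫ y, g y * u s y ∂ouMeasure)
      (Real.exp (a * s) * ∫ y, g y * G s y ∂ouMeasure) s := fun s hs => by
    refine (((hasDerivAt_id' s).const_mul a).exp.fun_mul
      (S.hasDerivAt_integral_mul (hθ.trans_le hs) hderiv hg hg')).congr_deriv ?_
    rw [heigen s hs]
    ring
  have hforcing : ∀ s ≥ θ, ‖Real.exp (a * s) * ∫ y, g y * G s y ∂ouMeasure‖ ≤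
      A * Real.exp (θ / 2) * h θ * Real.exp (-((1 - a) * s)) := fun s hs => by
    rw [norm_mul, Real.norm_of_nonneg (Real.exp_nonneg _), Real.norm_eq_abs]
    calc _ ≤ Real.exp (a * s) * (A * (Real.exp (-s / 2) * (Real.exp ((θ - s) / 2) * h θ))) := by
          gcongr
          exact (S.abs_integral_mul_forcing_le (hθ.trans_le hs) hM (hfreq s hs) hg).trans
            (by gcongr; exact hgood s hs)
      _ = A * (Real.exp (a * s) * Real.exp (-s / 2) * Real.exp ((θ - s) / 2)) * h θ := by ring
      _ = A * (Real.exp (θ / 2) * Real.exp (-((1 - a) * s))) * h θ := by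
          rw [← Real.exp_add, ← Real.exp_add, ← Real.exp_add]
          congr 3
          ring
      _ = _ := by ring
  have hint := norm_le_of_norm_deriv_le_mul_exp (sub_pos.2 ha) hmoment hforcing
    (S.tendsto_exp_mul_integral_mul hg ha)
  rw [norm_mul, Real.norm_of_nonneg (Real.exp_nonneg _), Real.norm_eq_abs] at hint
  refine le_of_mul_le_mul_left (hint.trans_eq ?_) (Real.exp_pos (a * θ))
  have hexp : Real.exp (θ / 2) * Real.exp (-((1 - a) * θ)) =
      Real.exp (a * θ) * Real.exp (-θ / 2) := by
    rw [← Real.exp_add, ← Real.exp_add]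
    congr 1
    ring
  linear_combination A * h θ / (1 - a) * hexp

lemma eventually_abs_integral_mul_le (S : PerturbedOU B C u ux uxx G) {g g' : ℝ → ℝ} {a η : ℝ}
    (hderiv : ∀ y, HasDerivAt g (g' y) y) (hg : PolyGrowth g) (hg' : PolyGrowth g') (ha : a < 1)
    (heigen : ∀ s > 0, ∫ y, g' y * ux s y ∂ouMeasure = a * ∫ y, g y * u s y ∂ouMeasure)
    (hη : 0 < η) :
    ∀ᶠ θ in atTop, (∀ s ≥ θ, √(∫ y, u s y ^ 2 ∂ouMeasure) ≤
        Real.exp ((θ - s) / 2) * √(∫ y, u θ y ^ 2 ∂ouMeasure)) →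
      |∫ y, g y * u θ y ∂ouMeasure| ≤ η * √(∫ y, u θ y ^ 2 ∂ouMeasure) := by
  obtain ⟨M, hM, hfreq⟩ := S.exists_hasFrequencyLE
  set A := √(∫ y, g y ^ 2 ∂ouMeasure) * (C * √(2 * (1 + M))) / (1 - a)
  have hlim : Tendsto (fun θ : ℝ => A * Real.exp (-θ / 2)) atTop (𝓝 0) := by
    simpa [neg_div] using (Real.tendsto_exp_neg_atTop_nhds_zero.comp
      (tendsto_id.atTop_div_const two_pos)).const_mul A
  filter_upwards [eventually_ge_atTop 1, hlim.eventually_le_const hη] with θ hθ hsmall hgood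
  have hθ₀ : 0 < θ := one_pos.trans_le hθ
  exact (S.abs_integral_mul_le hθ₀ hM (fun s hs => hfreq s (hθ.trans hs)) hgood hderiv hg hg' ha
    fun s hs => heigen s (hθ₀.trans_le hs)).trans
      (mul_le_mul_of_nonneg_right hsmall (Real.sqrt_nonneg _))

lemma exists_frequently_twoSignChangesOn (S : PerturbedOU B C u ux uxx G) :
    ∃ K > 0, ∃ᶠ θ in atTop, TwoSignChangesOn (u θ) (Icc (-K) K) := by
  obtain ⟨M, hM, hfreq⟩ := S.exists_hasFrequencyLE
  obtain ⟨K, hK, η, hη, hsign⟩ := HasFrequencyLE.exists_twoSignChangesOn hM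
  have hmoment₀ := S.eventually_abs_integral_mul_le (fun y => hasDerivAt_const y (1 : ℝ))
    (by fun_prop) (by fun_prop) zero_lt_one (fun s _ => by simp) hη
  have hmoment₁ := S.eventually_abs_integral_mul_le hasDerivAt_id' (by fun_prop) (by fun_prop)
    one_half_lt_one (fun s hs => by
      obtain ⟨hu, hux, -⟩ := S.polyGrowth hs
      rw [integral_mul_ouMeasure (S.hasDerivAt_space s hs) hu hux]
      simp) hη
  simp only [one_mul] at hmoment₀
  refine ⟨K, hK, (S.frequently_forall_ge_sqrt_integral_sq_le.and_eventually
    ((eventually_ge_atTop 1).and (hmoment₀.and hmoment₁))).mono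
      fun θ ⟨hgood, hθ, hθ₀, hθ₁⟩ => ?_⟩
  exact hsign (hfreq θ hθ) (S.integral_sq_pos (one_pos.trans_le hθ)) (hθ₀ hgood) (hθ₁ hgood)

end PerturbedOU

end Moments

section BlowUp

/-- A solution of the parabolic differential inequality which is bounded by `B` together with its
continuous derivatives. -/
structure BoundedParabolicIneq (B C : ℝ) (v vt vx vxx : ℝ → ℝ → ℝ) : Prop
    extends ParabolicIneq C v vt vx vxx where
  continuous_time : Continuous (Function.uncurry vt)
  continuous_deriv : Continuous (Function.uncurry vx)
  continuous_deriv₂ : Continuous (Function.uncurry vxx)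
  abs_le : ∀ t x, |v t x| ≤ B
  abs_time_le : ∀ t x, |vt t x| ≤ B
  abs_deriv_le : ∀ t x, |vx t x| ≤ B
  abs_deriv₂_le : ∀ t x, |vxx t x| ≤ B

/-- The function `w` in the self-similar coordinates `θ = -log (t₀ - t)` and
`y = (x - x₀) / √(t₀ - t)` about `(t₀, x₀)`. -/
noncomputable def selfSimilar (t₀ x₀ : ℝ) (w : ℝ → ℝ → ℝ) (θ y : ℝ) : ℝ :=
  w (t₀ - Real.exp (-θ)) (x₀ + Real.exp (-θ / 2) * y)

variable {v vt vx vxx w w' : ℝ → ℝ → ℝ} {B C K r t t₀ x₀ θ : ℝ}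

lemma exp_neg_eq_sq (θ : ℝ) : Real.exp (-θ) = Real.exp (-θ / 2) ^ 2 := by
  rw [← Real.exp_nat_mul]
  congr 1
  push_cast
  ring

lemma continuous_uncurry_selfSimilar (hw : Continuous (Function.uncurry w)) :
    Continuous (Function.uncurry (selfSimilar t₀ x₀ w)) :=
  hw.comp (by fun_prop : Continuous fun p : ℝ × ℝ =>
    (t₀ - Real.exp (-p.1), x₀ + Real.exp (-p.1 / 2) * p.2))

lemma hasDerivAt_selfSimilar_space (hw : ∀ t x, HasDerivAt (w t) (w' t x) x) (y : ℝ) :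
    HasDerivAt (selfSimilar t₀ x₀ w θ) (Real.exp (-θ / 2) * selfSimilar t₀ x₀ w' θ y) y := by
  have hscale : HasDerivAt (fun y => x₀ + Real.exp (-θ / 2) * y) (Real.exp (-θ / 2)) y := by
    simpa using ((hasDerivAt_id' y).const_mul (Real.exp (-θ / 2))).const_add x₀
  rw [mul_comm]
  exact (hw (t₀ - Real.exp (-θ)) (x₀ + Real.exp (-θ / 2) * y)).comp y hscale

lemma TwoSignChangesOn.of_selfSimilar
    (h : TwoSignChangesOn (selfSimilar t₀ x₀ v θ) (Icc (-K) K)) (hr : Real.exp (-θ / 2) * K ≤ r) :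
    TwoSignChangesOn (v (t₀ - Real.exp (-θ))) (Icc (x₀ - r) (x₀ + r)) := by
  obtain ⟨a, ha, b, hb, c, hc, hab, hbc, hφab, hφbc⟩ := h
  have hmem : ∀ y ∈ Icc (-K) K, x₀ + Real.exp (-θ / 2) * y ∈ Icc (x₀ - r) (x₀ + r) := by
    intro y hy
    have habs : |Real.exp (-θ / 2) * y| ≤ r := by
      rw [abs_mul, abs_of_pos (Real.exp_pos _)]
      exact (mul_le_mul_of_nonneg_left (abs_le.2 hy) (Real.exp_nonneg _)).trans hr
    rw [abs_le] at habs
    constructor <;> linarith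
  exact ⟨_, hmem a ha, _, hmem b hb, _, hmem c hc, by gcongr, by gcongr, hφab, hφbc⟩

lemma ParabolicIneq.constant_nonneg (hv : ParabolicIneq C v vt vx vxx) (hne : v t ≠ 0) :
    0 ≤ C := by
  obtain ⟨x, hx⟩ := Function.ne_iff.1 hne
  exact nonneg_of_mul_nonneg_left ((abs_nonneg _).trans (hv.abs_sub_le t x))
    (add_pos_of_pos_of_nonneg (abs_pos.2 hx) (abs_nonneg _))

namespace BoundedParabolicIneq

lemma hasDerivAt_comp (hv : BoundedParabolicIneq B C v vt vx vxx) {a b : ℝ → ℝ} {a' b' : ℝ}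
    (ha : HasDerivAt a a' θ) (hb : HasDerivAt b b' θ) :
    HasDerivAt (fun s => v (a s) (b s)) (a' * vt (a θ) (b θ) + b' * vx (a θ) (b θ)) θ := by
  have hcont : ∀ {w : ℝ → ℝ → ℝ}, Continuous (Function.uncurry w) → Continuous
      fun p : ℝ × ℝ => ContinuousLinearMap.toSpanSingleton ℝ (w p.1 p.2) := fun hw =>
    (ContinuousLinearMap.toSpanSingletonCLE (𝕜 := ℝ) (E := ℝ)).continuous.comp hw
  have hfderiv : HasFDerivAt (fun p : ℝ × ℝ => v p.1 p.2)
      ((ContinuousLinearMap.toSpanSingleton ℝ (vt (a θ) (b θ))).coprod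
        (.toSpanSingleton ℝ (vx (a θ) (b θ)))) (a θ, b θ) :=
    (hasStrictFDerivAt_uncurry_coprod (𝕜 := ℝ) (u := (a θ, b θ)) (f := v)
      (f₁ := fun t x => .toSpanSingleton ℝ (vt t x)) (f₂ := fun t x => .toSpanSingleton ℝ (vx t x))
      (.of_forall fun p => (hv.hasDerivAt_time p.1 p.2).hasFDerivAt)
      (.of_forall fun p => (hv.hasDerivAt_space p.1 p.2).hasFDerivAt)
      (hcont hv.continuous_time).continuousAt
      (hcont hv.continuous_deriv).continuousAt).hasFDerivAt
  exact hfderiv.comp_hasDerivAt θ (ha.prodMk hb)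

lemma hasDerivAt_selfSimilar_time (hv : BoundedParabolicIneq B C v vt vx vxx) (y : ℝ) :
    HasDerivAt (fun s => selfSimilar t₀ x₀ v s y)
      (Real.exp (-θ) * selfSimilar t₀ x₀ vt θ y -
        y / 2 * (Real.exp (-θ / 2) * selfSimilar t₀ x₀ vx θ y)) θ := by
  have htime := (hasDerivAt_neg θ).exp.const_sub t₀
  have hspace := (((hasDerivAt_neg θ).div_const 2).exp.mul_const y).const_add x₀
  refine (hv.hasDerivAt_comp htime hspace).congr_deriv ?_
  simp only [selfSimilar]
  ring

lemma abs_le_sq (hv : BoundedParabolicIneq B C v vt vx vxx) (h₀ : v t₀ x₀ = 0)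
    (h₁ : vx t₀ x₀ = 0) (x : ℝ) : |v t₀ x| ≤ B * (x - x₀) ^ 2 := by
  have hB : 0 ≤ B := (abs_nonneg _).trans (hv.abs_le 0 0)
  have hderiv : ∀ z, |vx t₀ z| ≤ B * |z - x₀| := fun z => by
    simpa [h₁] using convex_univ.norm_image_sub_le_of_norm_hasDerivWithin_le
      (fun z _ => (hv.hasDerivAt_space₂ t₀ z).hasDerivWithinAt)
      (fun z _ => hv.abs_deriv₂_le t₀ z) (mem_univ x₀) (mem_univ z)
  have hmvt := (convex_closedBall x₀ |x - x₀|).norm_image_sub_le_of_norm_hasDerivWithin_le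
    (C := B * |x - x₀|) (fun z _ => (hv.hasDerivAt_space t₀ z).hasDerivWithinAt)
    (fun z hz => (hderiv z).trans (mul_le_mul_of_nonneg_left hz hB))
    (Metric.mem_closedBall_self (abs_nonneg _)) (Metric.mem_closedBall.2 (Real.dist_eq x x₀).le)
  simpa [h₀, mul_assoc, ← pow_two] using hmvt

lemma abs_selfSimilar_le (hv : BoundedParabolicIneq B C v vt vx vxx) (h₀ : v t₀ x₀ = 0)
    (h₁ : vx t₀ x₀ = 0) (y : ℝ) :
    |selfSimilar t₀ x₀ v θ y| ≤ B * Real.exp (-θ) * (1 + y ^ 2) := by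
  set x := x₀ + Real.exp (-θ / 2) * y
  have htime : |v (t₀ - Real.exp (-θ)) x - v t₀ x| ≤ B * Real.exp (-θ) := by
    simpa using convex_univ.norm_image_sub_le_of_norm_hasDerivWithin_le
      (fun s _ => (hv.hasDerivAt_time s x).hasDerivWithinAt)
      (fun s _ => hv.abs_time_le s x) (mem_univ t₀) (mem_univ (t₀ - Real.exp (-θ)))
  have hspace : |v t₀ x| ≤ B * (Real.exp (-θ) * y ^ 2) := by
    simpa [x, mul_pow, ← exp_neg_eq_sq] using hv.abs_le_sq h₀ h₁ x
  calc |selfSimilar t₀ x₀ v θ y| = |(v (t₀ - Real.exp (-θ)) x - v t₀ x) + v t₀ x| := by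
        rw [sub_add_cancel, selfSimilar]
    _ ≤ B * Real.exp (-θ) + B * (Real.exp (-θ) * y ^ 2) :=
        (abs_add_le _ _).trans (add_le_add htime hspace)
    _ = B * Real.exp (-θ) * (1 + y ^ 2) := by ring

lemma abs_selfSimilar_forcing_le (hv : BoundedParabolicIneq B C v vt vx vxx) (hC : 0 ≤ C)
    (hθ : 0 ≤ θ) (y : ℝ) :
    |Real.exp (-θ) * (selfSimilar t₀ x₀ vt θ y - selfSimilar t₀ x₀ vxx θ y)| ≤
      C * Real.exp (-θ / 2) * (|selfSimilar t₀ x₀ v θ y| +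
        |Real.exp (-θ / 2) * selfSimilar t₀ x₀ vx θ y|) := by
  have hexp : Real.exp (-θ / 2) ≤ 1 := Real.exp_le_one_iff.2 (by linarith)
  rw [abs_mul, abs_mul, abs_of_pos (Real.exp_pos _), abs_of_pos (Real.exp_pos _), exp_neg_eq_sq]
  set E := Real.exp (-θ / 2)
  have : 0 ≤ E := Real.exp_nonneg _
  calc E ^ 2 * |selfSimilar t₀ x₀ vt θ y - selfSimilar t₀ x₀ vxx θ y|
      ≤ E ^ 2 * (C * (|selfSimilar t₀ x₀ v θ y| + |selfSimilar t₀ x₀ vx θ y|)) := by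
        gcongr
        exact hv.abs_sub_le _ _
    _ = C * E * (E * |selfSimilar t₀ x₀ v θ y| + E * |selfSimilar t₀ x₀ vx θ y|) := by ring
    _ ≤ C * E * (|selfSimilar t₀ x₀ v θ y| + E * |selfSimilar t₀ x₀ vx θ y|) := by
        gcongr
        exact mul_le_of_le_one_left (abs_nonneg _) hexp

lemma perturbedOU_selfSimilar (hv : BoundedParabolicIneq B C v vt vx vxx) (hne : ∀ t, v t ≠ 0)
    (h₀ : v t₀ x₀ = 0) (h₁ : vx t₀ x₀ = 0) :
    PerturbedOU B C (selfSimilar t₀ x₀ v)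
      (fun θ y => Real.exp (-θ / 2) * selfSimilar t₀ x₀ vx θ y)
      (fun θ y => Real.exp (-θ) * selfSimilar t₀ x₀ vxx θ y)
      (fun θ y => Real.exp (-θ) * (selfSimilar t₀ x₀ vt θ y - selfSimilar t₀ x₀ vxx θ y)) where
  hasDerivAt_time θ _ y := (hv.hasDerivAt_selfSimilar_time y).congr_deriv (by
    simp only [ouOperator]
    ring)
  hasDerivAt_space θ _ y := hasDerivAt_selfSimilar_space hv.hasDerivAt_space y
  hasDerivAt_space₂ θ _ y :=
    ((hasDerivAt_selfSimilar_space hv.hasDerivAt_space₂ y).const_mul _).congr_deriv (by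
      rw [← mul_assoc, ← pow_two, ← exp_neg_eq_sq])
  continuous_deriv := (by fun_prop : Continuous fun p : ℝ × ℝ => Real.exp (-p.1 / 2)).mul
    (continuous_uncurry_selfSimilar hv.continuous_deriv)
  continuous_deriv₂ := (by fun_prop : Continuous fun p : ℝ × ℝ => Real.exp (-p.1)).mul
    (continuous_uncurry_selfSimilar hv.continuous_deriv₂)
  continuous_forcing θ _ := continuous_const.mul
    (((continuous_uncurry_selfSimilar hv.continuous_time).uncurry_left θ).sub
      ((continuous_uncurry_selfSimilar hv.continuous_deriv₂).uncurry_left θ))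
  abs_le θ _ y := hv.abs_le _ _
  abs_deriv_le θ hθ y := by
    rw [abs_mul, abs_of_pos (Real.exp_pos _)]
    exact (mul_le_of_le_one_left (abs_nonneg _) (Real.exp_le_one_iff.2 (by linarith))).trans
      (hv.abs_deriv_le _ _)
  abs_deriv₂_le θ hθ y := by
    rw [abs_mul, abs_of_pos (Real.exp_pos _)]
    exact (mul_le_of_le_one_left (abs_nonneg _) (Real.exp_le_one_iff.2 (by linarith))).trans
      (hv.abs_deriv₂_le _ _)
  abs_forcing_le θ hθ y :=
    hv.abs_selfSimilar_forcing_le (hv.constant_nonneg (hne t₀)) (le_of_lt hθ) y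
  decay θ _ y := hv.abs_selfSimilar_le h₀ h₁ y
  ne_zero θ _ hzero := hne (t₀ - Real.exp (-θ)) (funext fun x => by
    simpa [selfSimilar, mul_div_cancel₀] using
      congrFun hzero ((x - x₀) / Real.exp (-θ / 2)))

lemma frequently_twoSignChangesOn (hv : BoundedParabolicIneq B C v vt vx vxx)
    (hne : ∀ t, v t ≠ 0) (h₀ : v t₀ x₀ = 0) (h₁ : vx t₀ x₀ = 0) (hr : 0 < r) :
    ∃ᶠ t in 𝓝 t₀, TwoSignChangesOn (v t) (Icc (x₀ - r) (x₀ + r)) := by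
  obtain ⟨K, -, hfreq⟩ := (hv.perturbedOU_selfSimilar hne h₀ h₁).exists_frequently_twoSignChangesOn
  have htime : Tendsto (fun θ => t₀ - Real.exp (-θ)) atTop (𝓝 t₀) := by
    simpa using Real.tendsto_exp_neg_atTop_nhds_zero.const_sub t₀
  have hspace : Tendsto (fun θ : ℝ => Real.exp (-θ / 2) * K) atTop (𝓝 0) := by
    simpa [neg_div] using (Real.tendsto_exp_neg_atTop_nhds_zero.comp
      (tendsto_id.atTop_div_const two_pos)).mul_const K
  exact htime.frequently ((hfreq.and_eventually (hspace.eventually_le_const hr)).mono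
    fun θ h => h.1.of_selfSimilar h.2)

theorem deriv_ne_zero_of_zeroNumber_const (hv : BoundedParabolicIneq B C v vt vx vxx)
    (hne : ∀ t, v t ≠ 0) (hconst : ∀ s t, zeroNumber (v s) = zeroNumber (v t))
    (h₀ : v t₀ x₀ = 0) : vx t₀ x₀ ≠ 0 := by
  intro h₁
  have hfin := hv.zeroNumber_ne_top (hv.constant_nonneg (hne t₀)) hv.abs_le t₀
  have hlim : Tendsto v (𝓝 t₀) (𝓝 (v t₀)) :=
    (continuous_pi fun x => Continuous.uncurry_right x hv.continuous).tendsto t₀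
  obtain ⟨t, ht⟩ := (frequently_zeroNumber_add_two_le (hv.periodic t₀) hfin h₀ hlim fun r hr =>
    hv.frequently_twoSignChangesOn hne h₀ h₁ hr).exists
  rw [hconst t t₀, add_comm] at ht
  exact ht.not_gt (ENat.lt_add_left hfin two_pos)

end BoundedParabolicIneq

end BlowUp

section Solutions

variable {f : ℝ → ℝ → ℝ → ℝ} {γ γ₁ γ₂ : ℝ → ℝ → ℝ} {B C p p₁ p₂ : ℝ}

lemma exists_abs_le_of_periodic {g : ℝ → ℝ → ℝ} (hg : Continuous fun q : ℝ × ℝ => g q.1 q.2)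
    (hp : 0 < p) (htime : Function.Periodic g p) (hspace : ∀ t, Function.Periodic (g t) 1) :
    ∃ B, ∀ t x, |g t x| ≤ B := by
  obtain ⟨B, hB⟩ := ((isCompact_Icc (a := (0 : ℝ)) (b := p)).prod
    (isCompact_Icc (a := (0 : ℝ)) (b := 1))).exists_bound_of_continuousOn hg.continuousOn
  refine ⟨B, fun t x => ?_⟩
  obtain ⟨s, hs, hts⟩ := htime.exists_mem_Ico₀ hp t
  obtain ⟨y, hy, hxy⟩ := (hspace s).exists_mem_Ico₀ one_pos x
  rw [hts, hxy]
  exact hB (s, y) ⟨Ico_subset_Icc_self hs, Ico_subset_Icc_self hy⟩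

lemma periodic_deriv {φ : ℝ → ℝ} {c : ℝ} (hφ : Function.Periodic φ c) :
    Function.Periodic (deriv φ) c := fun x => by
  rw [← deriv_comp_add_const, hφ.funext]

lemma IsClassicalSolution.exists_bound (hγ : IsClassicalSolution f γ) (hp : 0 < p)
    (hper : Function.Periodic γ p) :
    ∃ B, ∀ t x, |γ t x| ≤ B ∧ |deriv (fun s => γ s x) t| ≤ B ∧ |deriv (γ t) x| ≤ B ∧
      |deriv (deriv (γ t)) x| ≤ B := by
  obtain ⟨hspace, hcont, -, -, -, hcont_time, hcont_deriv, hcont_deriv₂, -⟩ := hγ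
  obtain ⟨B₁, h₁⟩ := exists_abs_le_of_periodic hcont hp hper hspace
  obtain ⟨B₂, h₂⟩ := exists_abs_le_of_periodic (g := fun t x => deriv (fun s => γ s x) t)
    hcont_time hp (fun t => funext fun x => periodic_deriv (fun s => congrFun (hper s) x) t)
    (fun t x => by simp only [fun s => hspace s x])
  obtain ⟨B₃, h₃⟩ := exists_abs_le_of_periodic (g := fun t => deriv (γ t))
    hcont_deriv hp (fun t => by simp only [hper t]) fun t => periodic_deriv (hspace t)
  obtain ⟨B₄, h₄⟩ := exists_abs_le_of_periodic (g := fun t => deriv (deriv (γ t)))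
    hcont_deriv₂ hp (fun t => by simp only [hper t])
    fun t => periodic_deriv (periodic_deriv (hspace t))
  exact ⟨max (max B₁ B₂) (max B₃ B₄), fun t x =>
    ⟨(h₁ t x).trans (by simp), (h₂ t x).trans (by simp), (h₃ t x).trans (by simp),
      (h₄ t x).trans (by simp)⟩⟩

lemma exists_abs_sub_le_of_locallyLipschitz
    (hf : LocallyLipschitz fun q : ℝ × ℝ × ℝ => f q.1 q.2.1 q.2.2) (B : ℝ) :
    ∃ C, ∀ x ∈ Icc (0 : ℝ) 1, ∀ u ∈ Icc (-B) B, ∀ u' ∈ Icc (-B) B, ∀ q ∈ Icc (-B) B,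
      ∀ q' ∈ Icc (-B) B, |f x u q - f x u' q'| ≤ C * (|u - u'| + |q - q'|) := by
  obtain ⟨L, hL⟩ := (hf.locallyLipschitzOn
    (s := Icc 0 1 ×ˢ Icc (-B) B ×ˢ Icc (-B) B)).exists_lipschitzOnWith_of_compact
      (isCompact_Icc.prod (isCompact_Icc.prod isCompact_Icc))
  refine ⟨L, fun x hx u hu u' hu' q hq q' hq' => ?_⟩
  calc |f x u q - f x u' q'| ≤ L * dist (x, u, q) (x, u', q') :=
        hL.dist_le_mul (x, u, q) ⟨hx, hu, hq⟩ (x, u', q') ⟨hx, hu', hq'⟩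
    _ ≤ L * (|u - u'| + |q - q'|) := by
        gcongr
        simp [Prod.dist_eq, Real.dist_eq]

lemma IsClassicalSolution.exists_abs_sub_deriv₂_le
    (hf : LocallyLipschitz fun q : ℝ × ℝ × ℝ => f q.1 q.2.1 q.2.2)
    (hγ₁ : IsClassicalSolution f γ₁) (hγ₂ : IsClassicalSolution f γ₂)
    (h₁ : ∀ t x, |γ₁ t x| ≤ B ∧ |deriv (γ₁ t) x| ≤ B)
    (h₂ : ∀ t x, |γ₂ t x| ≤ B ∧ |deriv (γ₂ t) x| ≤ B) :
    ∃ C, ∀ t x, |(deriv (fun s => γ₁ s x) t - deriv (fun s => γ₂ s x) t) -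
      (deriv (deriv (γ₁ t)) x - deriv (deriv (γ₂ t)) x)| ≤
        C * (|γ₁ t x - γ₂ t x| + |deriv (γ₁ t) x - deriv (γ₂ t) x|) := by
  obtain ⟨C, hC⟩ := exists_abs_sub_le_of_locallyLipschitz hf B
  obtain ⟨hper₁, -, -, -, -, -, -, -, heq₁⟩ := hγ₁
  obtain ⟨hper₂, -, -, -, -, -, -, -, heq₂⟩ := hγ₂
  refine ⟨C, fun t x => ?_⟩
  -- Both sides are periodic in `x`, so it is enough to prove the estimate for `x ∈ [0, 1]`.
  have hperiodic : Function.Periodic (fun x =>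
      C * (|γ₁ t x - γ₂ t x| + |deriv (γ₁ t) x - deriv (γ₂ t) x|) -
      |(deriv (fun s => γ₁ s x) t - deriv (fun s => γ₂ s x) t) -
        (deriv (deriv (γ₁ t)) x - deriv (deriv (γ₂ t)) x)|) 1 := fun x => by
    simp only [fun s => hper₁ s x, fun s => hper₂ s x, periodic_deriv (hper₁ t) x,
      periodic_deriv (hper₂ t) x, periodic_deriv (periodic_deriv (hper₁ t)) x,
      periodic_deriv (periodic_deriv (hper₂ t)) x]
  obtain ⟨y, hy, hxy⟩ := hperiodic.exists_mem_Ico₀ one_pos x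
  rw [← sub_nonneg, hxy, sub_nonneg, heq₁, heq₂, sub_sub_sub_comm, add_sub_cancel_left,
    add_sub_cancel_left]
  exact hC y (Ico_subset_Icc_self hy) _ (abs_le.1 (h₁ t y).1) _ (abs_le.1 (h₂ t y).1)
    _ (abs_le.1 (h₁ t y).2) _ (abs_le.1 (h₂ t y).2)

lemma IsClassicalSolution.exists_boundedParabolicIneq_sub
    (hf : LocallyLipschitz fun q : ℝ × ℝ × ℝ => f q.1 q.2.1 q.2.2)
    (hγ₁ : IsClassicalSolution f γ₁) (hγ₂ : IsClassicalSolution f γ₂)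
    (hp₁ : 0 < p₁) (hp₂ : 0 < p₂)
    (hper₁ : Function.Periodic γ₁ p₁) (hper₂ : Function.Periodic γ₂ p₂) :
    ∃ B C, BoundedParabolicIneq B C (fun t x => γ₁ t x - γ₂ t x)
      (fun t x => deriv (fun s => γ₁ s x) t - deriv (fun s => γ₂ s x) t)
      (fun t x => deriv (γ₁ t) x - deriv (γ₂ t) x)
      (fun t x => deriv (deriv (γ₁ t)) x - deriv (deriv (γ₂ t)) x) := by
  obtain ⟨B₁, h₁⟩ := hγ₁.exists_bound hp₁ hper₁
  obtain ⟨B₂, h₂⟩ := hγ₂.exists_bound hp₂ hper₂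
  obtain ⟨C, hC⟩ := hγ₁.exists_abs_sub_deriv₂_le hf hγ₂ (B := max B₁ B₂)
    (fun t x => ⟨(h₁ t x).1.trans (le_max_left _ _), (h₁ t x).2.2.1.trans (le_max_left _ _)⟩)
    (fun t x => ⟨(h₂ t x).1.trans (le_max_right _ _), (h₂ t x).2.2.1.trans (le_max_right _ _)⟩)
  have hsub : ∀ {a b : ℝ}, |a| ≤ B₁ → |b| ≤ B₂ → |a - b| ≤ B₁ + B₂ := fun ha hb =>
    (abs_sub _ _).trans (add_le_add ha hb)
  obtain ⟨hspace₁, hc₁, ht₁, hx₁, hxx₁, hct₁, hcx₁, hcxx₁, -⟩ := hγ₁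
  obtain ⟨hspace₂, hc₂, ht₂, hx₂, hxx₂, hct₂, hcx₂, hcxx₂, -⟩ := hγ₂
  exact ⟨B₁ + B₂, C,
    { hasDerivAt_time := fun t x => (ht₁ t x).hasDerivAt.sub (ht₂ t x).hasDerivAt
      hasDerivAt_space := fun t x => (hx₁ t x).hasDerivAt.sub (hx₂ t x).hasDerivAt
      hasDerivAt_space₂ := fun t x => (hxx₁ t x).hasDerivAt.sub (hxx₂ t x).hasDerivAt
      periodic := fun t => (hspace₁ t).sub (hspace₂ t)
      continuous := hc₁.sub hc₂
      abs_sub_le := hC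
      continuous_time := hct₁.sub hct₂
      continuous_deriv := hcx₁.sub hcx₂
      continuous_deriv₂ := hcxx₁.sub hcxx₂
      abs_le := fun t x => hsub (h₁ t x).1 (h₂ t x).1
      abs_time_le := fun t x => hsub (h₁ t x).2.1 (h₂ t x).2.1
      abs_deriv_le := fun t x => hsub (h₁ t x).2.2.1 (h₂ t x).2.2.1
      abs_deriv₂_le := fun t x => hsub (h₁ t x).2.2.2 (h₂ t x).2.2.2 }⟩

lemma IsEquilibrium.isClassicalSolution {e : ℝ → ℝ} (he : IsEquilibrium f e) :
    IsClassicalSolution f fun _ => e := by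
  obtain ⟨hper, he₂, heq⟩ := he
  have hderiv : ContDiff ℝ 1 (deriv e) := ContDiff.deriv' (n := 1) (by rwa [one_add_one_eq_two])
  have hdiff : Differentiable ℝ e := he₂.differentiable two_ne_zero
  refine ⟨fun _ => hper, hdiff.continuous.comp continuous_snd, fun t x => differentiableAt_const _,
    fun _ => hdiff, fun _ => hderiv.differentiable one_ne_zero, ?_,
    hderiv.continuous.comp continuous_snd,
    (hderiv.continuous_deriv le_rfl).comp continuous_snd, fun t x => ?_⟩
  · simpa only [deriv_const] using continuous_const
  · rw [heq, deriv_const]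

theorem zero_number_constant_no_multiple_zero_general
    (hf : LocallyLipschitz fun q : ℝ × ℝ × ℝ => f q.1 q.2.1 q.2.2)
    (hγ₁ : IsClassicalSolution f γ₁) (hγ₂ : IsClassicalSolution f γ₂)
    (hp₁ : 0 < p₁) (hp₂ : 0 < p₂)
    (hper₁ : Function.Periodic γ₁ p₁) (hper₂ : Function.Periodic γ₂ p₂)
    (hne : ∀ t, γ₁ t ≠ γ₂ t) :
    (∀ t s : ℝ, zeroNumber (fun x => γ₁ t x - γ₂ t x) = zeroNumber (fun x => γ₁ s x - γ₂ s x)) ∧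
      ∀ t : ℝ, ¬ HasMultipleZero (fun x => γ₁ t x - γ₂ t x) := by
  obtain ⟨B, C, hv⟩ := hγ₁.exists_boundedParabolicIneq_sub hf hγ₂ hp₁ hp₂ hper₁ hper₂
  have hγ₂cont : Continuous γ₂ := continuous_pi fun x => Continuous.uncurry_right x hγ₂.2.1
  have hconst := eq_of_antitone_of_mapClusterPt lowerSemicontinuous_zeroNumber
    hv.antitone_zeroNumber (mapClusterPt_sub_of_periodic hper₁ hper₂ hp₁ hp₂ hγ₂cont)
  refine ⟨hconst, ?_⟩
  rintro t ⟨x, hzero, hderiv⟩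
  exact hv.deriv_ne_zero_of_zeroNumber_const (fun t => sub_ne_zero.2 (hne t)) hconst hzero
    ((hv.hasDerivAt_space t x).deriv.symm.trans hderiv)

end Solutions

/-- **Constancy of the zero number and absence of multiple zeros for differences of
critical elements.**  If `e` is an equilibrium and `γ` a classical periodic solution
of minimal period `p > 0` with `γ(·,t) ≠ e` for every `t`, then `z(e - γ(·,t))` is
independent of `t` and `x ↦ e(x) - γ(x,t)` never has a multiple zero.  The same holds
for the difference of two distinct equilibria and for the difference of two classical
periodic solutions `γ₁`, `γ₂` with `γ₁(·,t) ≠ γ₂(·,t)` for all `t`. -/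
theorem zero_number_constant_no_multiple_zero
    (f : ℝ → ℝ → ℝ → ℝ)
    (hf_reg : ContDiff ℝ 2 (fun q : ℝ × ℝ × ℝ => f q.1 q.2.1 q.2.2))
    (hf_per : ∀ (x u q : ℝ), f (x + 1) u q = f x u q)
    -- an equilibrium and a periodic solution avoiding it
    (e : ℝ → ℝ) (he : IsEquilibrium f e)
    (γ : ℝ → ℝ → ℝ) (p : ℝ) (hγ : IsPeriodicSolution f γ p)
    (hne : ∀ t, γ t ≠ e)
    -- two distinct equilibria
    (e₁ e₂ : ℝ → ℝ) (he₁ : IsEquilibrium f e₁) (he₂ : IsEquilibrium f e₂)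
    (he₁₂ : e₁ ≠ e₂)
    -- two classical periodic solutions with disjoint time-slices
    (γ₁ γ₂ : ℝ → ℝ → ℝ) (p₁ p₂ : ℝ)
    (hγ₁ : IsPeriodicSolution f γ₁ p₁) (hγ₂ : IsPeriodicSolution f γ₂ p₂)
    (hγ₁₂ : ∀ t, γ₁ t ≠ γ₂ t) :
    ((∀ t s : ℝ,
        zeroNumber (fun x => e x - γ t x) = zeroNumber (fun x => e x - γ s x))
      ∧ ∀ t : ℝ, ¬ HasMultipleZero (fun x => e x - γ t x))
    ∧ (¬ HasMultipleZero (fun x => e₁ x - e₂ x))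
    ∧ ((∀ t s : ℝ,
        zeroNumber (fun x => γ₁ t x - γ₂ t x) = zeroNumber (fun x => γ₁ s x - γ₂ s x))
      ∧ ∀ t : ℝ, ¬ HasMultipleZero (fun x => γ₁ t x - γ₂ t x)) := by
  have hf := (hf_reg.of_le one_le_two).locallyLipschitz
  refine ⟨?_, ?_, ?_⟩
  · exact zero_number_constant_no_multiple_zero_general hf he.isClassicalSolution hγ.1
      one_pos hγ.2.1 (fun _ => rfl) hγ.2.2.1 fun t => (hne t).symm
  · exact (zero_number_constant_no_multiple_zero_general hf he₁.isClassicalSolution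
      he₂.isClassicalSolution one_pos one_pos (fun _ => rfl) (fun _ => rfl) fun _ => he₁₂).2 0
  · exact zero_number_constant_no_multiple_zero_general hf hγ₁.1 hγ₂.1 hγ₁.2.1 hγ₂.2.1
      hγ₁.2.2.1 hγ₂.2.2.1 hγ₁₂
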